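/- arXiv:1302.1336 — 10 statements merged into one kernel-verified Lean document; each statement's English description precedes it below -/
import Mathlib

section
/- Real embedding of observables preserves algebraic structure and expectation values: let n ≥ 1, let A^s be a Hermitian complex matrix on ι s for each s : Fin n, and let ρ be any complex matrix indexed by (Π s : Fin n, ι s). Then each real embedding Â^s has real entries and is symmetric (Â^s = (Â^s)ᵀ); if (A^s)² = A^s then (Â^s)² = Â^s; and tr[ρ̂·(⊗_s Â^s)] = Re tr[ρ·(⊗_s A^s)], where ρ̂ is the real embedding of ρ. In particular, if ρ and all A^s are Hermitian, then tr[ρ̂·(⊗_s Â^s)] = tr[ρ·(⊗_s A^s)]. -/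
open Matrix
open scoped Kronecker ComplexOrder

/-- Partial transpose on the first tensor factor. -/
def ptA {ιA ιB : Type*} (ρ : Matrix (ιA × ιB) (ιA × ιB) ℂ) : Matrix (ιA × ιB) (ιA × ιB) ℂ :=
  fun p q => ρ (q.1, p.2) (p.1, q.2)

/-- Sum of the absolute values of the negative eigenvalues of a Hermitian matrix
(0 if the matrix is not Hermitian). -/
noncomputable def negEig {ι : Type*} [Fintype ι] [DecidableEq ι] (M : Matrix ι ι ℂ) : ℝ :=
  letI := Classical.dec M.IsHermitian
  if h : M.IsHermitian then ∑ i, max 0 (-(h.eigenvalues i)) else 0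
/-- The 2×2 matrix Y = [[0,1],[-1,0]] (viewed as a complex matrix). -/
noncomputable def Ymat : Matrix (Fin 2) (Fin 2) ℂ := !![0, 1; -1, 0]

/-- The complex 2×2 matrix 1 - iY = [[1,-i],[i,1]]. -/
noncomputable def oneMinusIY : Matrix (Fin 2) (Fin 2) ℂ := !![1, -Complex.I; Complex.I, 1]

/-- Real embedding of an observable: Â = 1 ⊗ A_r + Y ⊗ A_i, as a block matrix
[[A_r, A_i], [-A_i, A_r]] on Fin 2 × ι. -/
noncomputable def obsEmbed {ι : Type*} (A : Matrix ι ι ℂ) :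
    Matrix (Fin 2 × ι) (Fin 2 × ι) ℂ :=
  fun p q => (1 : Matrix (Fin 2) (Fin 2) ℂ) p.1 q.1 * ((A p.2 q.2).re : ℂ)
    + Ymat p.1 q.1 * ((A p.2 q.2).im : ℂ)

/-- Real embedding of an n-partite state: the entry at row (a,i), column (b,j) is
2^(-n) · Re[(∏ s, (1-iY)(a s, b s)) · ρ(i,j)]. -/
noncomputable def stateEmbed {n : ℕ} {ι : Fin n → Type*}
    (ρ : Matrix ((s : Fin n) → ι s) ((s : Fin n) → ι s) ℂ) :
    Matrix ((s : Fin n) → Fin 2 × ι s) ((s : Fin n) → Fin 2 × ι s) ℂ :=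
  fun r c =>
    ((((2 : ℝ) ^ n)⁻¹ *
      ((∏ s, oneMinusIY (r s).1 (c s).1) * ρ (fun s => (r s).2) (fun s => (c s).2)).re : ℝ) : ℂ)

/-- Tensor product of one matrix per party. -/
def npTensor {n : ℕ} {ι : Fin n → Type*} (M : (s : Fin n) → Matrix (ι s) (ι s) ℂ) :
    Matrix ((s : Fin n) → ι s) ((s : Fin n) → ι s) ℂ :=
  fun i j => ∏ s, M s (i s) (j s)

/-- Partial transpose across the bipartition m : exchanges row and column index
at every coordinate s ∈ m. -/
def ptm {n : ℕ} {ι : Fin n → Type*} [DecidableEq (Fin n)] (m : Finset (Fin n))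
    (ρ : Matrix ((s : Fin n) → ι s) ((s : Fin n) → ι s) ℂ) :
    Matrix ((s : Fin n) → ι s) ((s : Fin n) → ι s) ℂ :=
  fun i j => ρ (fun s => if s ∈ m then j s else i s) (fun s => if s ∈ m then i s else j s)

theorem obsEmbed_real {ι : Type*} (A : Matrix ι ι ℂ) (p q) :
    obsEmbed A p q = (((obsEmbed A p q).re : ℝ) : ℂ) := by
  obtain ⟨a, i⟩ := p
  obtain ⟨b, j⟩ := q
  fin_cases a <;> fin_cases b <;> simp [obsEmbed, Ymat]

theorem obsEmbed_mul {ι : Type*} [Fintype ι] (A B : Matrix ι ι ℂ) :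
    obsEmbed (A * B) = obsEmbed A * obsEmbed B := by
  ext ⟨a, i⟩ ⟨b, j⟩
  rw [Matrix.mul_apply, Fintype.sum_prod_type, Fin.sum_univ_two]
  fin_cases a <;> fin_cases b <;>
    simp [obsEmbed, Ymat, Matrix.mul_apply, ← Finset.sum_add_distrib,
      ← Finset.sum_neg_distrib, ← Finset.sum_sub_distrib, Matrix.one_apply] <;>
    refine Finset.sum_congr rfl fun x _ => ?_ <;> ring

theorem local_sum {ι : Type*} (A : Matrix ι ι ℂ) (i j : ι) :
    ∑ a : Fin 2, ∑ b : Fin 2, oneMinusIY a b * obsEmbed A (b, j) (a, i) = 2 * A j i := by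
  have h := Complex.re_add_im (A j i)
  simp [Fin.sum_univ_two, oneMinusIY, obsEmbed, Ymat]
  linear_combination 2 * h

/-- Splitting a multi-index into qubit components and remaining components. -/
def splitIdx {n : ℕ} (ι : Fin n → Type*) :
    (Fin n → Fin 2) × ((s : Fin n) → ι s) ≃ ((s : Fin n) → Fin 2 × ι s) where
  toFun p := fun s => (p.1 s, p.2 s)
  invFun r := (fun s => (r s).1, fun s => (r s).2)
  left_inv _ := rfl
  right_inv _ := rfl

theorem sum_sum_prod {n : ℕ} (f : Fin n → Fin 2 → Fin 2 → ℂ) :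
    ∑ a : Fin n → Fin 2, ∑ b : Fin n → Fin 2, ∏ s, f s (a s) (b s) =
      ∏ s, ∑ x, ∑ y, f s x y := by
  rw [Finset.prod_univ_sum, Fintype.piFinset_univ]
  refine Finset.sum_congr rfl fun a _ => ?_
  rw [Finset.prod_univ_sum, Fintype.piFinset_univ]

theorem trace_embed {n : ℕ} {ι : Fin n → Type*} [∀ s, Fintype (ι s)]
    (A : (s : Fin n) → Matrix (ι s) (ι s) ℂ)
    (ρ : Matrix ((s : Fin n) → ι s) ((s : Fin n) → ι s) ℂ) :
    Matrix.trace (stateEmbed ρ * npTensor (fun s => obsEmbed (A s))) =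
      ((Matrix.trace (ρ * npTensor A)).re : ℂ) := by
  have key : ∑ r : (s : Fin n) → Fin 2 × ι s, ∑ c : (s : Fin n) → Fin 2 × ι s,
      ((∏ s, oneMinusIY (r s).1 (c s).1) * ρ (fun s => (r s).2) (fun s => (c s).2)) *
        ∏ s, obsEmbed (A s) (c s) (r s) = (2 : ℂ) ^ n * Matrix.trace (ρ * npTensor A) := by
    rw [← (splitIdx ι).sum_comp, Fintype.sum_prod_type, Finset.sum_comm]
    simp only [Matrix.trace, Matrix.diag, Matrix.mul_apply, Finset.mul_sum]
    refine Finset.sum_congr rfl fun i _ => ?_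
    have h1 : ∀ a : Fin n → Fin 2, ∀ F : ((s : Fin n) → Fin 2 × ι s) → ℂ,
        ∑ c, F c = ∑ j, ∑ b, F (splitIdx ι (b, j)) := by
      intro a F
      rw [← (splitIdx ι).sum_comp, Fintype.sum_prod_type, Finset.sum_comm]
    rw [Finset.sum_congr rfl fun a _ => h1 a _, Finset.sum_comm]
    refine Finset.sum_congr rfl fun j _ => ?_
    have h2 := sum_sum_prod (fun s a b => oneMinusIY a b * obsEmbed (A s) (b, j s) (a, i s))
    simp only [local_sum, Finset.prod_mul_distrib, Finset.prod_const, Finset.card_univ,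
      Fintype.card_fin] at h2
    have h3 : (2 : ℂ) ^ n * (ρ i j * npTensor A j i) =
        ρ i j * ((2 : ℂ) ^ n * ∏ s, A s (j s) (i s)) := by
      simp only [npTensor]; ring
    rw [h3, ← h2, Finset.mul_sum]
    refine Finset.sum_congr rfl fun a _ => ?_
    rw [Finset.mul_sum]
    refine Finset.sum_congr rfl fun b _ => ?_
    simp only [splitIdx, Equiv.coe_fn_mk]
    ring
  have h4 : Matrix.trace (ρ * npTensor A) = (((2 : ℝ) ^ n)⁻¹ : ℝ) *
      ((2 : ℂ) ^ n * Matrix.trace (ρ * npTensor A)) := by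
    push_cast
    rw [inv_mul_cancel_left₀ (by positivity)]
  rw [h4, ← key, Complex.re_ofReal_mul]
  simp only [Matrix.trace, Matrix.diag, Matrix.mul_apply, Complex.re_sum, Finset.mul_sum,
    Complex.ofReal_sum]
  refine Finset.sum_congr rfl fun r _ => Finset.sum_congr rfl fun c _ => ?_
  have h5 : ∏ s, obsEmbed (A s) (c s) (r s) =
      ((∏ s, (obsEmbed (A s) (c s) (r s)).re : ℝ) : ℂ) := by
    rw [Complex.ofReal_prod]
    exact Finset.prod_congr rfl fun s _ => obsEmbed_real _ _ _
  simp only [npTensor, stateEmbed]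
  rw [h5, Complex.re_mul_ofReal]
  push_cast
  ring

/-- the real embedding of observables has real symmetric entries, preserves
idempotency, and preserves (the real part of) expectation values; for Hermitian ρ and
Hermitian observables the expectation values themselves are preserved. -/
theorem realEmbedding_preserves_structure_and_expectations
    {n : ℕ} (hn : 1 ≤ n) {ι : Fin n → Type*} [∀ s, Fintype (ι s)] [∀ s, Nonempty (ι s)]
    (A : (s : Fin n) → Matrix (ι s) (ι s) ℂ) (hA : ∀ s, (A s).IsHermitian)
    (ρ : Matrix ((s : Fin n) → ι s) ((s : Fin n) → ι s) ℂ) :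
    (∀ s, (∀ p q, ((obsEmbed (A s)) p q).im = 0) ∧ (obsEmbed (A s))ᵀ = obsEmbed (A s)) ∧
    (∀ s, A s * A s = A s → obsEmbed (A s) * obsEmbed (A s) = obsEmbed (A s)) ∧
    Matrix.trace (stateEmbed ρ * npTensor (fun s => obsEmbed (A s))) =
      ((Matrix.trace (ρ * npTensor A)).re : ℂ) ∧
    (ρ.IsHermitian →
      Matrix.trace (stateEmbed ρ * npTensor (fun s => obsEmbed (A s))) =
        Matrix.trace (ρ * npTensor A)) := by
  have hsymm : ∀ s, (obsEmbed (A s))ᵀ = obsEmbed (A s) := by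
    intro s
    ext ⟨a, i⟩ ⟨b, j⟩
    have h := (hA s).apply i j
    have hr : (A s j i).re = (A s i j).re := by rw [← h]; simp
    have hi : (A s j i).im = -(A s i j).im := by rw [← h]; simp
    fin_cases a <;> fin_cases b <;> simp [obsEmbed, Ymat, hr, hi]
  refine ⟨fun s => ⟨fun p q => ?_, hsymm s⟩, fun s h => ?_, trace_embed A ρ, fun hρ => ?_⟩
  · rw [obsEmbed_real]; simp
  · rw [← obsEmbed_mul, h]
  · rw [trace_embed]
    have hT : (npTensor A)ᴴ = npTensor A := by
      ext i j
      simp only [Matrix.conjTranspose_apply, npTensor, star_prod]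
      exact Finset.prod_congr rfl fun s _ => (hA s).apply _ _
    apply Complex.conj_eq_iff_re.mp
    change star _ = _
    rw [← Matrix.trace_conjTranspose, Matrix.conjTranspose_mul, hT, hρ.eq, Matrix.trace_mul_comm]
end

section
/- Spectral properties of the real embedding: let ρ be a Hermitian complex matrix indexed by (Π s : Fin n, ι s) and let ρ̂ be its real embedding. Then ρ̂ has real entries and is symmetric (ρ̂ = ρ̂ᵀ, hence Hermitian), tr ρ̂ = tr ρ, the sums of absolute values of the eigenvalues (with multiplicity) agree, Σᵢ |λᵢ(ρ̂)| = Σᵢ |λᵢ(ρ)|, and if ρ is positive semidefinite then so is ρ̂. -/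
open Matrix
open scoped Kronecker ComplexOrder

/-- Sum of the absolute values of the eigenvalues (with multiplicity) of a Hermitian
matrix (0 if not Hermitian). -/
noncomputable def absEigSum {ι : Type*} [Fintype ι] [DecidableEq ι] (M : Matrix ι ι ℂ) : ℝ :=
  letI := Classical.dec M.IsHermitian
  if h : M.IsHermitian then ∑ i, |h.eigenvalues i| else 0

open Polynomial in
/-- If `M = V diag(d) Vᴴ` with `V` an isometry, the trace norm of `M` is `∑ |d i|`. -/
theorem absEigSum_of_isometry {m k : Type*} [Fintype m] [DecidableEq m] [Fintype k] [DecidableEq k]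
    (M : Matrix m m ℂ) (hM : M.IsHermitian) (V : Matrix m k ℂ) (d : k → ℝ)
    (hV : Vᴴ * V = 1) (h : M = V * diagonal (fun i => (d i : ℂ)) * Vᴴ) :
    absEigSum M = ∑ i, |d i| := by
  have key := charpoly_mul_comm' (V * diagonal (fun i => (d i : ℂ))) Vᴴ
  rw [← h, ← Matrix.mul_assoc, hV, Matrix.one_mul, charpoly_diagonal] at key
  have h2 := congrArg (fun p : ℂ[X] => (p.roots.map (fun z => ‖z‖)).sum) key
  have hne : (∏ i, (X - C ((d i : ℂ)))) ≠ 0 := by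
    simp [Finset.prod_ne_zero_iff, Polynomial.X_sub_C_ne_zero]
  have hX : ∀ k : ℕ, (X ^ k : ℂ[X]) ≠ 0 := fun k => pow_ne_zero _ X_ne_zero
  have hne2 : M.charpoly ≠ 0 := (charpoly_monic M).ne_zero
  simp only [roots_mul (mul_ne_zero (hX _) hne2), roots_mul (mul_ne_zero (hX _) hne),
    roots_X_pow, Multiset.map_add, Multiset.sum_add, Multiset.map_nsmul, Multiset.sum_nsmul,
    Multiset.map_singleton, Multiset.sum_singleton, norm_zero, smul_zero, zero_add,
    hM.roots_charpoly_eq_eigenvalues, roots_prod _ _ hne] at h2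
  simp at h2
  rw [absEigSum, dif_pos hM]
  exact h2

/-- local isometry column -/
noncomputable def locIso {κ : Type*} [DecidableEq κ] (x : Fin 2 × κ) (k : κ) : ℂ :=
  if x.2 = k then (((√2)⁻¹ : ℝ) : ℂ) * ![1, Complex.I] x.1 else 0

noncomputable def isoA {n : ℕ} (ι : Fin n → Type*) [∀ s, DecidableEq (ι s)] :
    Matrix ((s : Fin n) → Fin 2 × ι s) ((s : Fin n) → ι s) ℂ :=
  fun r i => ∏ s, locIso (r s) (i s)

section
variable {n : ℕ} {ι : Fin n → Type*} [∀ s, Fintype (ι s)] [∀ s, DecidableEq (ι s)]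

theorem sqrt_two_inv_sq : ((√2 : ℝ) : ℂ)⁻¹ * ((√2 : ℝ) : ℂ)⁻¹ = 1 / 2 := by
  rw [← mul_inv, ← Complex.ofReal_mul, Real.mul_self_sqrt (by norm_num)]
  norm_num

theorem isoA_star_mul : (isoA ι)ᴴ * isoA ι = 1 := by
  ext i j
  have hs : ∀ s, ∑ x : Fin 2 × ι s, star (locIso x (i s)) * locIso x (j s)
      = if i s = j s then 1 else 0 := by
    intro s
    rw [Fintype.sum_prod_type, Fin.sum_univ_two]
    simp only [locIso]
    have h := sqrt_two_inv_sq
    by_cases hij : i s = j s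
    · simp [hij]
      linear_combination 2 * h - (((√2 : ℝ) : ℂ)⁻¹ * ((√2 : ℝ) : ℂ)⁻¹) * Complex.I_mul_I
    · simp [hij, Ne.symm hij]
  simp only [mul_apply, conjTranspose_apply, isoA, star_prod, ← Finset.prod_mul_distrib]
  rw [← Fintype.prod_sum (fun s x => star (locIso x (i s)) * locIso x (j s))]
  simp only [hs, Fintype.prod_ite_zero, one_apply, funext_iff, Finset.prod_const_one]

theorem isoA_star_mul_conj (hn : n ≠ 0) : (isoA ι)ᴴ * (isoA ι).map star = 0 := by
  ext i j
  have hs : ∀ s, ∑ x : Fin 2 × ι s, star (locIso x (i s)) * star (locIso x (j s)) = 0 := by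
    intro s
    rw [Fintype.sum_prod_type, Fin.sum_univ_two]
    simp only [locIso, apply_ite star, star_zero]
    by_cases hij : i s = j s
    · simp [hij]
      linear_combination (((√2 : ℝ) : ℂ)⁻¹ * ((√2 : ℝ) : ℂ)⁻¹) * Complex.I_mul_I
    · simp [hij, Ne.symm hij]
  simp only [mul_apply, conjTranspose_apply, isoA, star_prod, ← Finset.prod_mul_distrib,
    Matrix.map_apply]
  rw [← Fintype.prod_sum (fun s x => star (locIso x (i s)) * star (locIso x (j s)))]
  simp only [hs, Matrix.zero_apply]
  exact Finset.prod_eq_zero (Finset.mem_univ (⟨0, Nat.pos_of_ne_zero hn⟩ : Fin n)) rfl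

theorem map_star_mul {l m k : Type*} [Fintype m] (M : Matrix l m ℂ) (N : Matrix m k ℂ) :
    (M * N).map star = M.map star * N.map star := by
  ext i j
  simp only [mul_apply, Matrix.map_apply, star_sum, star_mul']

theorem isoA_conj_mul : ((isoA ι).map star)ᴴ * (isoA ι).map star = 1 := by
  have h := congrArg (fun M => M.map star) (isoA_star_mul (ι := ι))
  simp only [map_star_mul] at h
  rw [Matrix.map_one _ (star_zero _) (star_one _)] at h
  exact h

theorem isoA_apply (r : (s : Fin n) → Fin 2 × ι s) (i : (s : Fin n) → ι s) :
    isoA ι r i = if (fun s => (r s).2) = i then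
      ∏ s, (((√2)⁻¹ : ℝ) : ℂ) * ![1, Complex.I] (r s).1 else 0 := by
  simp only [isoA, locIso, Fintype.prod_ite_zero, funext_iff]
  congr

theorem isoA_conj_apply (ρ : Matrix ((s : Fin n) → ι s) ((s : Fin n) → ι s) ℂ)
    (r c : (s : Fin n) → Fin 2 × ι s) :
    (isoA ι * ρ * (isoA ι)ᴴ) r c = ((2 : ℂ) ^ n)⁻¹ *
      ((∏ s, oneMinusIY (r s).1 (c s).1) * ρ (fun s => (r s).2) (fun s => (c s).2)) := by
  have hl : ∀ a b : Fin 2, (((√2)⁻¹ : ℝ) : ℂ) * ![1, Complex.I] a *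
      star ((((√2)⁻¹ : ℝ) : ℂ) * ![1, Complex.I] b) = 2⁻¹ * oneMinusIY a b := by
    intro a b
    have h := sqrt_two_inv_sq
    fin_cases a <;> fin_cases b <;> simp [oneMinusIY]
    · linear_combination h
    · linear_combination (Complex.I) * h
    · linear_combination (Complex.I) * h
    · linear_combination h - (((√2 : ℝ) : ℂ)⁻¹ * ((√2 : ℝ) : ℂ)⁻¹) * Complex.I_mul_I
  have h3 : (∏ s, (((√2)⁻¹ : ℝ) : ℂ) * ![1, Complex.I] (r s).1) *
      star (∏ s, (((√2)⁻¹ : ℝ) : ℂ) * ![1, Complex.I] (c s).1) =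
      ((2 : ℂ) ^ n)⁻¹ * ∏ s, oneMinusIY (r s).1 (c s).1 := by
    rw [star_prod, ← Finset.prod_mul_distrib, Finset.prod_congr rfl
      (fun s _ => hl (r s).1 (c s).1), Finset.prod_mul_distrib]
    simp
  rw [← mul_assoc, ← h3]
  simp only [mul_apply, conjTranspose_apply, isoA_apply, apply_ite star, star_zero, ite_mul,
    mul_ite, zero_mul, mul_zero, Finset.sum_ite_eq, Finset.mem_univ, if_true]
  ring

theorem stateEmbed_eq (ρ : Matrix ((s : Fin n) → ι s) ((s : Fin n) → ι s) ℂ)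
    (hρ : ρ.IsHermitian) :
    stateEmbed ρ = (2⁻¹ : ℂ) • (isoA ι * ρ * (isoA ι)ᴴ +
      (isoA ι).map star * ρᵀ * ((isoA ι).map star)ᴴ) := by
  have ht : (isoA ι).map star * ρᵀ * ((isoA ι).map star)ᴴ
      = (isoA ι * ρ * (isoA ι)ᴴ).map star := by
    rw [map_star_mul, map_star_mul]
    congr 2
    ext i j
    exact (hρ.apply j i).symm
  rw [ht]
  ext r c
  simp only [Matrix.smul_apply, Matrix.add_apply, Matrix.map_apply, isoA_conj_apply, smul_eq_mul, stateEmbed]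
  generalize (∏ s, oneMinusIY (r s).1 (c s).1) * ρ (fun s => (r s).2) (fun s => (c s).2) = z
  have h2 : ((2 : ℂ) ^ n)⁻¹ = ((((2 : ℝ) ^ n)⁻¹ : ℝ) : ℂ) := by push_cast; rfl
  rw [h2]
  simp only [RCLike.star_def, Complex.add_conj]
  rw [Complex.re_ofReal_mul, Complex.ofReal_mul 2, Complex.ofReal_ofNat, ← mul_assoc,
    inv_mul_cancel₀ two_ne_zero, one_mul]

theorem stateEmbed_absEigSum (ρ : Matrix ((s : Fin n) → ι s) ((s : Fin n) → ι s) ℂ)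
    (hρ : ρ.IsHermitian) (hH : (stateEmbed ρ).IsHermitian) :
    absEigSum (stateEmbed ρ) = absEigSum ρ := by
  have hr : absEigSum ρ = ∑ i, |hρ.eigenvalues i| := by rw [absEigSum, dif_pos hρ]
  obtain ⟨U, hU, hsp⟩ : ∃ U : Matrix ((s : Fin n) → ι s) ((s : Fin n) → ι s) ℂ, Uᴴ * U = 1 ∧
      ρ = U * diagonal (fun i => (hρ.eigenvalues i : ℂ)) * Uᴴ := by
    refine ⟨hρ.eigenvectorUnitary, ?_, ?_⟩
    · exact Unitary.coe_star_mul_self hρ.eigenvectorUnitary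
    · exact hρ.spectral_theorem
  have hAU : (isoA ι * U)ᴴ * (isoA ι * U) = 1 := by
    rw [conjTranspose_mul, Matrix.mul_assoc, ← Matrix.mul_assoc _ (isoA ι), isoA_star_mul,
      Matrix.one_mul, hU]
  have hA : isoA ι * ρ * (isoA ι)ᴴ =
      (isoA ι * U) * diagonal (fun i => (hρ.eigenvalues i : ℂ)) * (isoA ι * U)ᴴ := by
    conv_lhs => rw [hsp]
    simp only [conjTranspose_mul, Matrix.mul_assoc]
  have hB : (isoA ι).map star * ρᵀ * ((isoA ι).map star)ᴴ =
      (isoA ι * U).map star * diagonal (fun i => (hρ.eigenvalues i : ℂ)) *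
        ((isoA ι * U).map star)ᴴ := by
    have h := congrArg (fun M => M.map star) hA
    simp only [map_star_mul (_ * _), map_star_mul (isoA ι) ρ,
      map_star_mul (isoA ι * U) (diagonal _)] at h
    have h1 : ρ.map star = ρᵀ := by
      ext i j
      exact hρ.apply j i
    have h2 : (diagonal (fun i => (hρ.eigenvalues i : ℂ))).map star
        = diagonal (fun i => (hρ.eigenvalues i : ℂ)) := by
      rw [diagonal_map (star_zero _)]
      simp
    rw [h1, h2] at h
    exact h
  rw [hr]
  by_cases hn : n = 0
  · subst hn
    refine absEigSum_of_isometry _ hH (isoA ι * U) _ hAU ?_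
    have h1 : (isoA ι).map star = isoA ι := by
      ext r i
      simp [isoA]
    have h2 : ρᵀ = ρ := by
      ext i j
      rw [Subsingleton.elim i j]
      rfl
    rw [stateEmbed_eq ρ hρ, h1, h2, ← hA, ← two_smul ℂ, smul_smul]
    norm_num
  · rw [absEigSum_of_isometry _ hH (fromCols (isoA ι * U) ((isoA ι * U).map star))
      (Sum.elim (fun i => hρ.eigenvalues i / 2) (fun i => hρ.eigenvalues i / 2))]
    · simp only [Fintype.sum_sum_type, Sum.elim_inl, Sum.elim_inr, ← Finset.sum_add_distrib]
      refine Finset.sum_congr rfl fun i _ => ?_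
      rw [abs_div, abs_two, add_halves]
    · have h12 : (isoA ι * U)ᴴ * (isoA ι * U).map star = 0 := by
        rw [map_star_mul, conjTranspose_mul, Matrix.mul_assoc, ← Matrix.mul_assoc _ ((isoA ι).map star),
          isoA_star_mul_conj hn, Matrix.zero_mul, Matrix.mul_zero]
      have h21 : ((isoA ι * U).map star)ᴴ * (isoA ι * U) = 0 := by
        have := congrArg conjTranspose h12
        simpa only [conjTranspose_mul, conjTranspose_conjTranspose, conjTranspose_zero,
          Matrix.mul_assoc] using this
      have h22 : ((isoA ι * U).map star)ᴴ * (isoA ι * U).map star = 1 := by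
        have h := congrArg (fun M => M.map star) hAU
        simp only [map_star_mul (_)ᴴ] at h
        rw [Matrix.map_one _ (star_zero _) (star_one _)] at h
        exact h
      rw [conjTranspose_fromCols_eq_fromRows_conjTranspose, fromRows_mul_fromCols, hAU, h12, h21,
        h22, fromBlocks_one]
    · have hd : diagonal (fun i => ((Sum.elim (fun i => hρ.eigenvalues i / 2)
          (fun i => hρ.eigenvalues i / 2) i : ℝ) : ℂ)) =
          fromBlocks ((2⁻¹ : ℂ) • diagonal (fun i => (hρ.eigenvalues i : ℂ))) 0 0
            ((2⁻¹ : ℂ) • diagonal (fun i => (hρ.eigenvalues i : ℂ))) := by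
        rw [← diagonal_smul, fromBlocks_diagonal]
        congr 1
        funext i
        rcases i with i | i <;> simp <;> ring
      rw [hd, fromCols_mul_fromBlocks, conjTranspose_fromCols_eq_fromRows_conjTranspose,
        fromCols_mul_fromRows, stateEmbed_eq ρ hρ, hA, hB]
      simp only [Matrix.mul_zero, add_zero, zero_add, Matrix.mul_smul, Matrix.smul_mul, smul_add]

end

/-- spectral properties of the real embedding of a Hermitian matrix ρ:
real entries, symmetric (hence Hermitian), same trace, same sum of absolute values of
eigenvalues, and positive semidefiniteness is preserved. -/
theorem realEmbedding_spectral_properties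
    {n : ℕ} {ι : Fin n → Type*} [∀ s, Fintype (ι s)] [∀ s, Nonempty (ι s)]
    [∀ s, DecidableEq (ι s)]
    (ρ : Matrix ((s : Fin n) → ι s) ((s : Fin n) → ι s) ℂ) (hρ : ρ.IsHermitian) :
    (∀ p q, ((stateEmbed ρ) p q).im = 0) ∧
    (stateEmbed ρ)ᵀ = stateEmbed ρ ∧
    (stateEmbed ρ).IsHermitian ∧
    Matrix.trace (stateEmbed ρ) = Matrix.trace ρ ∧
    absEigSum (stateEmbed ρ) = absEigSum ρ ∧
    (ρ.PosSemidef → (stateEmbed ρ).PosSemidef) := by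
  have hherm : (stateEmbed ρ).IsHermitian := by
    rw [stateEmbed_eq ρ hρ]
    have h1 := isHermitian_mul_mul_conjTranspose (isoA ι) hρ
    have h2 := isHermitian_mul_mul_conjTranspose ((isoA ι).map star) hρ.transpose
    have h3 := h1.add h2
    unfold IsHermitian at h3 ⊢
    rw [conjTranspose_smul, h3]
    simp
  have him : ∀ p q, ((stateEmbed ρ) p q).im = 0 := fun p q => Complex.ofReal_im _
  refine ⟨him, ?_, hherm, ?_, stateEmbed_absEigSum ρ hρ hherm, ?_⟩
  · ext p q
    rw [transpose_apply, ← hherm.apply p q]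
    exact (Complex.conj_eq_iff_im.mpr (him q p)).symm
  · rw [stateEmbed_eq ρ hρ, trace_smul, trace_add, trace_mul_comm, ← Matrix.mul_assoc,
      isoA_star_mul, trace_mul_comm (_ * ρᵀ), ← Matrix.mul_assoc, isoA_conj_mul, Matrix.one_mul,
      Matrix.one_mul, trace_transpose, smul_eq_mul]
    ring
  · intro hp
    rw [stateEmbed_eq ρ hρ]
    refine PosSemidef.smul ((hp.mul_mul_conjTranspose_same _).add
      (hp.transpose.mul_mul_conjTranspose_same _)) ?_
    have : (0 : ℂ) ≤ ((2⁻¹ : ℝ) : ℂ) := by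
      rw [Complex.zero_le_real]
      norm_num
    simpa using this
end

section
/- The real embedding preserves the negativity across every bipartition: let ρ be a Hermitian complex matrix indexed by (Π s : Fin n, ι s), let m ⊆ Fin n, and let ρ̂ be the real embedding of ρ, on whose index the partial transpose T_m exchanges the full coordinates (Fin 2 × ι s) of row and column for every s ∈ m. Then Σᵢ |λᵢ((ρ̂)^{T_m})| = Σᵢ |λᵢ(ρ^{T_m})| (sums of absolute values of eigenvalues with multiplicity), and consequently N_m(ρ̂) = N_m(ρ). -/
open Matrix
open scoped Kronecker ComplexOrder

/-- Interpolation lemma: matching power sums give matching sums of homogeneous functions. -/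
theorem sum_eq_of_power_sums {α β : Type*} [Fintype α] [Fintype β] (μ : α → ℝ) (l : β → ℝ)
    (c : ℝ) (hc : c ≠ 0) (f : ℝ → ℝ) (f0 : f 0 = 0) (fc : ∀ x, f x = c * f (x / c))
    (h : ∀ k : ℕ, ∑ i, μ i ^ (k + 1) = c * ∑ j, (l j / c) ^ (k + 1)) :
    ∑ i, f (μ i) = ∑ j, f (l j) := by
  classical
  let s : Finset ℝ := insert 0 (Finset.univ.image μ ∪ Finset.univ.image (fun j => l j / c))
  let p : Polynomial ℝ := Lagrange.interpolate s id f
  have hp : ∀ x ∈ s, p.eval x = f x := fun x hx =>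
    Lagrange.eval_interpolate_at_node (v := id) f (Function.injective_id.injOn) hx
  have h0 : p.coeff 0 = 0 := by
    rw [Polynomial.coeff_zero_eq_eval_zero, hp 0 (by simp [s]), f0]
  have hev : ∀ x, p.eval x = ∑ k ∈ Finset.range (p.natDegree), p.coeff (k + 1) * x ^ (k + 1) := by
    intro x
    rw [Polynomial.eval_eq_sum_range, Finset.sum_range_succ', h0]
    simp
  calc ∑ i, f (μ i) = ∑ i, p.eval (μ i) :=
        Finset.sum_congr rfl fun i _ => (hp _ (by simp [s])).symm
    _ = c * ∑ j, p.eval (l j / c) := by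
        simp_rw [hev]
        rw [Finset.sum_comm, Finset.sum_comm (s := (Finset.univ : Finset β)), Finset.mul_sum]
        refine Finset.sum_congr rfl fun k _ => ?_
        rw [← Finset.mul_sum, ← Finset.mul_sum, h]
        ring
    _ = c * ∑ j, f (l j / c) := by
        congr 1
        exact Finset.sum_congr rfl fun i _ => hp _ (by simp [s])
    _ = ∑ j, f (l j) := by
        rw [Finset.mul_sum]
        exact Finset.sum_congr rfl fun i _ => (fc _).symm

theorem trace_pow_eq_sum {α : Type*} [Fintype α] [DecidableEq α] {M : Matrix α α ℂ}
    (h : M.IsHermitian) (k : ℕ) : (M ^ k).trace = ((∑ i, h.eigenvalues i ^ k : ℝ) : ℂ) := by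
  conv_lhs => rw [h.spectral_theorem]
  rw [← map_pow, Unitary.conjStarAlgAut_apply, Matrix.trace_mul_comm, ← Matrix.mul_assoc]
  simp [Matrix.diagonal_pow, Matrix.trace_diagonal]

theorem npTensor_mul {n : ℕ} {ι : Fin n → Type*} [∀ s, Fintype (ι s)]
    (A B : (s : Fin n) → Matrix (ι s) (ι s) ℂ) :
    npTensor A * npTensor B = npTensor (fun s => A s * B s) := by
  ext i j
  simp only [npTensor, Matrix.mul_apply, ← Finset.prod_mul_distrib]
  rw [Finset.prod_univ_sum, Fintype.piFinset_univ]

theorem npTensor_trace {n : ℕ} {ι : Fin n → Type*} [∀ s, Fintype (ι s)]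
    (A : (s : Fin n) → Matrix (ι s) (ι s) ℂ) :
    (npTensor A).trace = ∏ s, (A s).trace := by
  simp only [npTensor, Matrix.trace, Matrix.diag]
  rw [Finset.prod_univ_sum, Fintype.piFinset_univ]

/-- Splitting of the index. -/
def splitEquiv {n : ℕ} (ι : Fin n → Type*) :
    ((s : Fin n) → Fin 2 × ι s) ≃ ((s : Fin n) → Fin 2) × ((s : Fin n) → ι s) where
  toFun r := (fun s => (r s).1, fun s => (r s).2)
  invFun p := fun s => (p.1 s, p.2 s)
  left_inv _ := rfl
  right_inv _ := rfl

/-- Kronecker product on the interleaved index. -/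
def kk {n : ℕ} {ι : Fin n → Type*} (q : Matrix (Fin n → Fin 2) (Fin n → Fin 2) ℂ)
    (σ : Matrix ((s : Fin n) → ι s) ((s : Fin n) → ι s) ℂ) :
    Matrix ((s : Fin n) → Fin 2 × ι s) ((s : Fin n) → Fin 2 × ι s) ℂ :=
  (q ⊗ₖ σ).submatrix (splitEquiv ι) (splitEquiv ι)

section
variable {n : ℕ} {ι : Fin n → Type*} [∀ s, Fintype (ι s)]

theorem kk_mul (q q' : Matrix (Fin n → Fin 2) (Fin n → Fin 2) ℂ)
    (σ σ' : Matrix ((s : Fin n) → ι s) ((s : Fin n) → ι s) ℂ) :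
    kk q σ * kk q' σ' = kk (q * q') (σ * σ') := by
  simp only [kk]
  rw [Matrix.submatrix_mul_equiv, Matrix.mul_kronecker_mul]

theorem kk_trace (q : Matrix (Fin n → Fin 2) (Fin n → Fin 2) ℂ)
    (σ : Matrix ((s : Fin n) → ι s) ((s : Fin n) → ι s) ℂ) :
    (kk q σ).trace = q.trace * σ.trace := by
  rw [← Matrix.trace_kronecker]
  exact (splitEquiv ι).sum_comp (fun p => (q ⊗ₖ σ) p p)

theorem kk_zero (σ : Matrix ((s : Fin n) → ι s) ((s : Fin n) → ι s) ℂ) :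
    kk 0 σ = 0 := by
  ext; simp [kk]

theorem kk_isHermitian (q : Matrix (Fin n → Fin 2) (Fin n → Fin 2) ℂ)
    (σ : Matrix ((s : Fin n) → ι s) ((s : Fin n) → ι s) ℂ) (hq : q.IsHermitian)
    (hσ : σ.IsHermitian) : (kk q σ).IsHermitian := by
  refine Matrix.IsHermitian.submatrix ?_ _
  rw [Matrix.IsHermitian, Matrix.conjTranspose_kronecker, hq.eq, hσ.eq]

end

/-- The local projector. -/
noncomputable def gg {n : ℕ} (m : Finset (Fin n)) (s : Fin n) : Matrix (Fin 2) (Fin 2) ℂ :=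
  (1 / 2 : ℂ) • (if s ∈ m then oneMinusIYᵀ else oneMinusIY)

theorem gg_mul_self {n : ℕ} (m : Finset (Fin n)) (s : Fin n) : gg m s * gg m s = gg m s := by
  unfold gg
  split_ifs <;> ext i j <;> fin_cases i <;> fin_cases j <;>
    simp [oneMinusIY, Matrix.mul_apply, Fin.sum_univ_two] <;> ring_nf <;> simp <;> ring_nf

theorem gg_mul_transpose {n : ℕ} (m : Finset (Fin n)) (s : Fin n) :
    gg m s * (gg m s)ᵀ = 0 := by
  unfold gg
  split_ifs <;> ext i j <;> fin_cases i <;> fin_cases j <;>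
    simp [oneMinusIY, Matrix.mul_apply, Fin.sum_univ_two] <;> ring_nf <;> simp

theorem gg_trace {n : ℕ} (m : Finset (Fin n)) (s : Fin n) : (gg m s).trace = 1 := by
  unfold gg
  split_ifs <;> simp [oneMinusIY, Matrix.trace, Fin.sum_univ_two] <;> norm_num

theorem gg_star {n : ℕ} (m : Finset (Fin n)) (s : Fin n) (i j : Fin 2) :
    star (gg m s i j) = gg m s j i := by
  unfold gg
  split_ifs <;> fin_cases i <;> fin_cases j <;> simp [oneMinusIY]

/-- The global projector. -/
noncomputable def qq {n : ℕ} (m : Finset (Fin n)) :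
    Matrix (Fin n → Fin 2) (Fin n → Fin 2) ℂ :=
  npTensor (ι := fun _ => Fin 2) (gg m)

theorem qq_transpose {n : ℕ} (m : Finset (Fin n)) :
    (qq m)ᵀ = npTensor (ι := fun _ => Fin 2) (fun s => (gg m s)ᵀ) := rfl

theorem qq_isHermitian {n : ℕ} (m : Finset (Fin n)) : (qq m).IsHermitian := by
  ext i j
  simp only [Matrix.conjTranspose_apply, qq, npTensor, star_prod, gg_star]

theorem qq_mul_self {n : ℕ} (m : Finset (Fin n)) : qq m * qq m = qq m := by
  simp only [qq, npTensor_mul, gg_mul_self]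

theorem qq_trace {n : ℕ} (m : Finset (Fin n)) : (qq m).trace = 1 := by
  simp only [qq, npTensor_trace, gg_trace, Finset.prod_const_one]

theorem qq_mul_transpose {n : ℕ} (hn : n ≠ 0) (m : Finset (Fin n)) : qq m * (qq m)ᵀ = 0 := by
  rw [qq_transpose]
  simp only [qq, npTensor_mul, gg_mul_transpose]
  ext i j
  exact Finset.prod_eq_zero (Finset.mem_univ ⟨0, Nat.pos_of_ne_zero hn⟩) rfl

theorem qq_transpose_mul {n : ℕ} (hn : n ≠ 0) (m : Finset (Fin n)) : (qq m)ᵀ * qq m = 0 := by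
  have h := congrArg Matrix.conjTranspose (qq_mul_transpose hn m)
  have h2 : (qq m)ᵀᴴ = (qq m)ᵀ := (qq_isHermitian m).transpose
  rwa [Matrix.conjTranspose_mul, h2, (qq_isHermitian m).eq, Matrix.conjTranspose_zero] at h

theorem ptm_isHermitian {n : ℕ} {ι : Fin n → Type*} (m : Finset (Fin n))
    (ρ : Matrix ((s : Fin n) → ι s) ((s : Fin n) → ι s) ℂ) (hρ : ρ.IsHermitian) :
    (ptm m ρ).IsHermitian := by
  ext i j
  exact hρ.apply _ _

theorem ptm_stateEmbed {n : ℕ} {ι : Fin n → Type*} (m : Finset (Fin n))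
    (ρ : Matrix ((s : Fin n) → ι s) ((s : Fin n) → ι s) ℂ) (hρ : ρ.IsHermitian) :
    ptm m (stateEmbed ρ) =
      (1 / 2 : ℂ) • (kk (qq m) (ptm m ρ) + kk (qq m)ᵀ (ptm m ρ)ᵀ) := by
  have key : ∀ z : ℂ, ((z.re : ℝ) : ℂ) = (1 / 2 : ℂ) * (z + star z) := by
    intro z
    rw [Complex.star_def, Complex.add_conj]; push_cast; ring
  ext r c
  have hq := (qq_isHermitian m).apply (fun s => (c s).1) (fun s => (r s).1)
  have hs := (ptm_isHermitian m ρ hρ).apply (fun s => (c s).2) (fun s => (r s).2)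
  have e : ptm m (stateEmbed ρ) r c =
      (((qq m (fun s => (r s).1) (fun s => (c s).1) *
        ptm m ρ (fun s => (r s).2) (fun s => (c s).2)).re : ℝ) : ℂ) := by
    have e1 : qq m (fun s => (r s).1) (fun s => (c s).1) = ((((2 : ℝ) ^ n)⁻¹ : ℝ) : ℂ) *
        ∏ s, oneMinusIY (if s ∈ m then c s else r s).1 (if s ∈ m then r s else c s).1 := by
      have : ((((2 : ℝ) ^ n)⁻¹ : ℝ) : ℂ) = ∏ s : Fin n, (1 / 2 : ℂ) := by simp
      rw [this, ← Finset.prod_mul_distrib]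
      simp only [qq, npTensor]
      refine Finset.prod_congr rfl fun s _ => ?_
      unfold gg
      split_ifs <;> simp
    have e2 : ptm m ρ (fun s => (r s).2) (fun s => (c s).2) =
        ρ (fun s => (if s ∈ m then c s else r s).2) (fun s => (if s ∈ m then r s else c s).2) := by
      unfold ptm
      congr 1 <;> funext s <;> split_ifs <;> rfl
    rw [e1, e2, mul_assoc, Complex.re_ofReal_mul]
    rfl
  rw [e, key, star_mul', hq, hs]
  rfl

theorem trace_pow_main {n : ℕ} {ι : Fin n → Type*} [∀ s, Fintype (ι s)]
    [∀ s, DecidableEq (ι s)] (hn : n ≠ 0) (m : Finset (Fin n))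
    (σ : Matrix ((s : Fin n) → ι s) ((s : Fin n) → ι s) ℂ) (k : ℕ) :
    (((1 / 2 : ℂ) • (kk (qq m) σ + kk (qq m)ᵀ σᵀ)) ^ (k + 1)).trace
      = 2 * ((1 / 2 : ℂ) ^ (k + 1) * (σ ^ (k + 1)).trace) := by
  have hpow : ∀ k : ℕ, (kk (qq m) σ + kk (qq m)ᵀ σᵀ) ^ (k + 1) =
      kk (qq m) (σ ^ (k + 1)) + kk (qq m)ᵀ (σᵀ ^ (k + 1)) := by
    intro k
    have ht : (qq m)ᵀ * (qq m)ᵀ = (qq m)ᵀ := by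
      rw [← Matrix.transpose_mul, qq_mul_self]
    induction k with
    | zero => simp
    | succ k ih =>
      rw [pow_succ, ih]
      simp only [add_mul, mul_add, kk_mul, qq_mul_self, ht, qq_mul_transpose hn,
        qq_transpose_mul hn, kk_zero, ← pow_succ]
      simp
  rw [smul_pow, hpow, Matrix.trace_smul, Matrix.trace_add, kk_trace, kk_trace,
    Matrix.trace_transpose, qq_trace, ← Matrix.transpose_pow, Matrix.trace_transpose, smul_eq_mul]
  ring

theorem trace_pow_zero {n : ℕ} {ι : Fin n → Type*} [∀ s, Fintype (ι s)]
    [∀ s, DecidableEq (ι s)] (hn : n = 0) (m : Finset (Fin n))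
    (σ : Matrix ((s : Fin n) → ι s) ((s : Fin n) → ι s) ℂ) (k : ℕ) :
    (((1 / 2 : ℂ) • (kk (qq m) σ + kk (qq m)ᵀ σᵀ)) ^ (k + 1)).trace
      = (σ ^ (k + 1)).trace := by
  subst hn
  have hq : (qq m)ᵀ = qq m := by
    ext i j; rw [Matrix.transpose_apply, Subsingleton.elim i j]
  have hs : σᵀ = σ := by
    ext i j; rw [Matrix.transpose_apply, Subsingleton.elim i j]
  rw [hq, hs, ← two_smul ℂ, smul_smul]
  norm_num
  have hpow : ∀ k : ℕ, (kk (qq m) σ) ^ (k + 1) = kk (qq m) (σ ^ (k + 1)) := by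
    intro k
    induction k with
    | zero => simp
    | succ k ih => rw [pow_succ, ih, kk_mul, qq_mul_self, ← pow_succ]
  rw [hpow, kk_trace, qq_trace, one_mul]

theorem sum_eig_eq {n : ℕ} {ι : Fin n → Type*} [∀ s, Fintype (ι s)]
    [∀ s, DecidableEq (ι s)]
    (ρ : Matrix ((s : Fin n) → ι s) ((s : Fin n) → ι s) ℂ) (hρ : ρ.IsHermitian)
    (m : Finset (Fin n)) (h1 : (ptm m (stateEmbed ρ)).IsHermitian)
    (h2 : (ptm m ρ).IsHermitian) (f : ℝ → ℝ) (f0 : f 0 = 0)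
    (fc : ∀ x, f x = 2 * f (x / 2)) :
    ∑ i, f (h1.eigenvalues i) = ∑ i, f (h2.eigenvalues i) := by
  have t1 : ∀ k : ℕ, (((1 / 2 : ℂ) • (kk (qq m) (ptm m ρ) + kk (qq m)ᵀ (ptm m ρ)ᵀ)) ^ k).trace =
      ((∑ i, h1.eigenvalues i ^ k : ℝ) : ℂ) := fun k => by
    rw [← trace_pow_eq_sum h1, ptm_stateEmbed m ρ hρ]
  have t2 := trace_pow_eq_sum h2
  by_cases hn : n = 0
  · refine sum_eq_of_power_sums _ _ 1 one_ne_zero f f0 (by simp) fun k => ?_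
    have := t1 (k + 1)
    rw [trace_pow_zero hn, t2] at this
    have := Complex.ofReal_injective this
    simp [this]
  · refine sum_eq_of_power_sums _ _ 2 two_ne_zero f f0 fc fun k => ?_
    have := t1 (k + 1)
    rw [trace_pow_main hn, t2] at this
    apply Complex.ofReal_injective
    rw [← this]
    simp only [div_pow, ← Finset.sum_div]
    push_cast
    ring

/-- the real embedding preserves the trace norm of the partial transpose
across every bipartition m, and hence preserves the negativity N_m. -/
theorem realEmbedding_preserves_negativity
    {n : ℕ} {ι : Fin n → Type*} [∀ s, Fintype (ι s)] [∀ s, Nonempty (ι s)]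
    [∀ s, DecidableEq (ι s)]
    (ρ : Matrix ((s : Fin n) → ι s) ((s : Fin n) → ι s) ℂ) (hρ : ρ.IsHermitian)
    (m : Finset (Fin n)) :
    absEigSum (ptm m (stateEmbed ρ)) = absEigSum (ptm m ρ) ∧
    negEig (ptm m (stateEmbed ρ)) = negEig (ptm m ρ) := by
  have h2 : (ptm m ρ).IsHermitian := ptm_isHermitian m ρ hρ
  have h1 : (ptm m (stateEmbed ρ)).IsHermitian := by
    rw [ptm_stateEmbed m ρ hρ]
    have := (kk_isHermitian _ _ (qq_isHermitian m) h2).add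
      (kk_isHermitian _ _ (qq_isHermitian m).transpose h2.transpose)
    rw [Matrix.IsHermitian, Matrix.conjTranspose_smul, this.eq]
    simp
  constructor
  · simp only [absEigSum, h1, h2, dif_pos]
    refine sum_eig_eq ρ hρ m h1 h2 (fun x => |x|) (by simp) fun x => ?_
    simp only [abs_div, abs_two]; ring
  · simp only [negEig, h1, h2, dif_pos]
    refine sum_eig_eq ρ hρ m h1 h2 (fun x => max 0 (-x)) (by simp) fun x => ?_
    rw [mul_max_of_nonneg _ _ (by norm_num : (0 : ℝ) ≤ 2)]
    congr 1 <;> ring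
end

section
/- First half of Proposition 2 (tensor-product PPT representation yields the commutative PPT condition): let ρ be a complex matrix indexed by (ι_A × ι_B) × (ι_A × ι_B) with ρ = ρ^{T_A}, let A : α → Matrix ι_A ι_A ℂ be a family of symmetric matrices ((A i)ᵀ = A i for all i), and let B be any complex matrix on ι_B. Then for every list s : List α, tr[ρ·(A(s) ⊗ B)] = tr[ρ·(A(s.reverse) ⊗ B)]. In particular, if P is a bipartite distribution with a tensor-product PPT quantum representation — P(i,j) = tr[ρ·(A_i ⊗ B_j)] with ρ a real PPT-invariant state (ρ = ρᵀ = ρ^{T_A} positive semidefinite of trace 1) and real symmetric A_i, B_j — then the commuting operators Ã_i = A_i ⊗ 1 and B̃_j = 1 ⊗ B_j together with ρ form a commutative PPT quantum representation of P. -/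
open Matrix
open scoped Kronecker ComplexOrder

/-- Ordered product of the matrices A along the list s. -/
noncomputable def listProd {α ι : Type*} [Fintype ι] [DecidableEq ι]
    (A : α → Matrix ι ι ℂ) (s : List α) : Matrix ι ι ℂ :=
  (s.map A).prod

theorem trace_ptA_aux {ιA ιB : Type*} [Fintype ιA] [Fintype ιB]
    (ρ : Matrix (ιA × ιB) (ιA × ιB) ℂ) (hpt : ptA ρ = ρ)
    (M : Matrix ιA ιA ℂ) (B : Matrix ιB ιB ℂ) :
    Matrix.trace (ρ * (M ⊗ₖ B)) = Matrix.trace (ρ * (Mᵀ ⊗ₖ B)) := by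
  have h : ∀ i j k l, ρ (i, j) (k, l) = ρ (k, j) (i, l) := by
    intro i j k l
    exact (congrFun (congrFun hpt (i, j)) (k, l)).symm
  simp only [Matrix.trace, Matrix.diag_apply, Matrix.mul_apply, Fintype.sum_prod_type,
    Matrix.kroneckerMap_apply, Matrix.transpose_apply]
  calc _ = ∑ i, ∑ k, ∑ j, ∑ l, ρ (i, j) (k, l) * (M k i * B l j) :=
        Finset.sum_congr rfl fun i _ => Finset.sum_comm
    _ = ∑ k, ∑ i, ∑ j, ∑ l, ρ (i, j) (k, l) * (M k i * B l j) := Finset.sum_comm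
    _ = ∑ k, ∑ i, ∑ j, ∑ l, ρ (k, j) (i, l) * (M k i * B l j) := by
        refine Finset.sum_congr rfl fun k _ => Finset.sum_congr rfl fun i _ =>
          Finset.sum_congr rfl fun j _ => Finset.sum_congr rfl fun l _ => ?_
        rw [h i j k l]
    _ = _ := Finset.sum_congr rfl fun i _ => Finset.sum_comm

theorem listProd_transpose_aux {α ι : Type*} [Fintype ι] [DecidableEq ι]
    (A : α → Matrix ι ι ℂ) (hA : ∀ i, (A i)ᵀ = A i) (s : List α) :
    (listProd A s)ᵀ = listProd A s.reverse := by
  induction s with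
  | nil => simp [listProd]
  | cons a s ih =>
    simp only [listProd] at ih
    simp [listProd, Matrix.transpose_mul, ih, hA]

theorem listProd_kron_left {α ιA ιB : Type*} [Fintype ιA] [DecidableEq ιA]
    [Fintype ιB] [DecidableEq ιB] (A : α → Matrix ιA ιA ℂ) (s : List α) :
    listProd (fun i => (A i) ⊗ₖ (1 : Matrix ιB ιB ℂ)) s =
      (listProd A s) ⊗ₖ (1 : Matrix ιB ιB ℂ) := by
  induction s with
  | nil => simp [listProd]
  | cons a s ih =>
    simp only [listProd] at ih
    simp only [listProd, List.map_cons, List.prod_cons, ih, ← Matrix.mul_kronecker_mul, mul_one]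

theorem listProd_kron_right {α ιA ιB : Type*} [Fintype ιA] [DecidableEq ιA]
    [Fintype ιB] [DecidableEq ιB] (B : α → Matrix ιB ιB ℂ) (s : List α) :
    listProd (fun i => (1 : Matrix ιA ιA ℂ) ⊗ₖ (B i)) s =
      (1 : Matrix ιA ιA ℂ) ⊗ₖ (listProd B s) := by
  induction s with
  | nil => simp [listProd]
  | cons a s ih =>
    simp only [listProd] at ih
    simp only [listProd, List.map_cons, List.prod_cons, ih, ← Matrix.mul_kronecker_mul, mul_one]

/-- first half of Proposition 2: for a PPT-invariant ρ and symmetric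
matrices A i, traces of products are invariant under reversing the A-word; in particular
a tensor-product PPT quantum representation of a distribution P yields a commutative PPT
quantum representation of P via Ã i = A i ⊗ 1 and B̃ j = 1 ⊗ B j. -/
theorem tensorProduct_PPT_gives_commutative_PPT
    {ιA ιB α β : Type*} [Fintype ιA] [Fintype ιB] [Nonempty ιA] [Nonempty ιB]
    [DecidableEq ιA] [DecidableEq ιB]
    (ρ : Matrix (ιA × ιB) (ιA × ιB) ℂ) (hpt : ptA ρ = ρ)
    (A : α → Matrix ιA ιA ℂ) (hAsym : ∀ i, (A i)ᵀ = A i) :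
    (∀ (B : Matrix ιB ιB ℂ) (s : List α),
      Matrix.trace (ρ * ((listProd A s) ⊗ₖ B)) =
        Matrix.trace (ρ * ((listProd A s.reverse) ⊗ₖ B))) ∧
    (∀ (B : β → Matrix ιB ιB ℂ), (∀ j, (B j)ᵀ = B j) →
      (∀ i p q, ((A i) p q).im = 0) → (∀ j p q, ((B j) p q).im = 0) →
      ρ.PosSemidef → Matrix.trace ρ = 1 → ρᵀ = ρ → (∀ p q, (ρ p q).im = 0) →
      ∀ (P : α → β → ℝ), (∀ i j, (P i j : ℂ) = Matrix.trace (ρ * ((A i) ⊗ₖ (B j)))) →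
        (∀ i j, ((A i) ⊗ₖ (1 : Matrix ιB ιB ℂ)) * ((1 : Matrix ιA ιA ℂ) ⊗ₖ (B j)) =
          ((1 : Matrix ιA ιA ℂ) ⊗ₖ (B j)) * ((A i) ⊗ₖ (1 : Matrix ιB ιB ℂ))) ∧
        (∀ i j, (P i j : ℂ) = Matrix.trace
          (ρ * (((A i) ⊗ₖ (1 : Matrix ιB ιB ℂ)) * ((1 : Matrix ιA ιA ℂ) ⊗ₖ (B j))))) ∧
        (∀ (s : List α) (t : List β),
          Matrix.trace (ρ * listProd (fun i => (A i) ⊗ₖ (1 : Matrix ιB ιB ℂ)) s *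
              listProd (fun j => (1 : Matrix ιA ιA ℂ) ⊗ₖ (B j)) t) =
            Matrix.trace (ρ * listProd (fun i => (A i) ⊗ₖ (1 : Matrix ιB ιB ℂ)) s.reverse *
              listProd (fun j => (1 : Matrix ιA ιA ℂ) ⊗ₖ (B j)) t))) := by
  have key : ∀ (B : Matrix ιB ιB ℂ) (s : List α),
      Matrix.trace (ρ * ((listProd A s) ⊗ₖ B)) =
        Matrix.trace (ρ * ((listProd A s.reverse) ⊗ₖ B)) := by
    intro B s
    rw [trace_ptA_aux ρ hpt, listProd_transpose_aux A hAsym]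
  refine ⟨key, ?_⟩
  intro B _ _ _ _ _ _ _ P hP
  refine ⟨?_, ?_, ?_⟩
  · intro i j
    simp only [← Matrix.mul_kronecker_mul, mul_one, one_mul]
  · intro i j
    simp only [← Matrix.mul_kronecker_mul, mul_one, one_mul, hP]
  · intro s t
    simp only [listProd_kron_left, listProd_kron_right, mul_assoc, ← Matrix.mul_kronecker_mul,
      mul_one, one_mul]
    exact key _ s
end

section
/- Proposition 2, converse direction (finite dimensions): let ρ̃ be a positive semidefinite trace-1 complex matrix on a finite nonempty type ι with real entries, and let Ã : α → Matrix ι ι ℂ and B̃ : β → Matrix ι ι ℂ be families of matrices with real entries that are symmetric ((Ã i)ᵀ = Ã i, (B̃ j)ᵀ = B̃ j), idempotent ((Ã i)² = Ã i, (B̃ j)² = B̃ j), and satisfy (Ã i)·(B̃ j) = (B̃ j)·(Ã i) for all i, j. Assume the commutative PPT condition: for all lists s : List α and t : List β, tr[ρ̃·Ã(s)·B̃(t)] = tr[ρ̃·Ã(s.reverse)·B̃(t)]. Then there exist finite nonempty types ι_A, ι_B, a bipartite quantum state ρ on ι_A × ι_B with ρ^{T_A} positive semidefinite, and Hermitian idempotent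 matrices A : α → Matrix ι_A ι_A ℂ, B : β → Matrix ι_B ι_B ℂ such that tr[ρ·(A i ⊗ B j)] = tr[ρ̃·(Ã i)·(B̃ j)] for all i, j. -/
open Matrix
open scoped Kronecker ComplexOrder

/-- A Hermitian matrix in a subalgebra, nonnegative against all squares of that subalgebra,
is positive semidefinite. -/
lemma psd_of_subalgebra {n : Type*} [Fintype n] [DecidableEq n]
    (S : Subalgebra ℂ (Matrix n n ℂ)) (M : Matrix n n ℂ) (hMS : M ∈ S) (hM : M.IsHermitian)
    (h : ∀ c ∈ S, 0 ≤ Matrix.trace (M * (cᴴ * c))) : M.PosSemidef := by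
  rw [hM.posSemidef_iff_eigenvalues_nonneg]
  intro k
  by_contra hk
  have hk' : hM.eigenvalues k < 0 := by simpa using hk
  classical
  let ev : n → ℂ := RCLike.ofReal ∘ hM.eigenvalues
  let T : Finset ℂ := Finset.univ.image ev
  let p : Polynomial ℂ := Lagrange.interpolate T id (fun z => if z = ev k then 1 else 0)
  have hp : ∀ i, p.eval (ev i) = if ev i = ev k then 1 else 0 := by
    intro i
    exact Lagrange.eval_interpolate_at_node (s := T) (v := id) (i := ev i) _
      (Set.injOn_id _) (Finset.mem_image_of_mem _ (Finset.mem_univ _))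
  have hc : Polynomial.aeval M p ∈ S := by
    have := (Polynomial.aeval (⟨M, hMS⟩ : S) p).2
    rwa [← Subalgebra.coe_val, ← Polynomial.aeval_algHom_apply] at this
  let φ := Unitary.conjStarAlgAut ℂ (Matrix n n ℂ) hM.eigenvectorUnitary
  have hs : M = φ (diagonal ev) := hM.spectral_theorem
  have hpe : Polynomial.aeval M p = φ (diagonal (fun i => if ev i = ev k then 1 else 0)) := by
    rw [hs, Polynomial.aeval_algHom_apply]
    congr 1
    have := Polynomial.aeval_algHom_apply (diagonalAlgHom (n := n) (α := ℂ) ℂ) ev p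
    simp only [diagonalAlgHom_apply] at this
    rw [this]
    congr 1
    funext i
    rw [← hp i]
    have := Polynomial.aeval_algHom_apply (Pi.evalAlgHom ℂ (fun _ : n => ℂ) i) ev p
    simpa using this.symm
  have := h _ hc
  have htrace : ∀ X, Matrix.trace (φ X) = Matrix.trace X := by
    intro X
    simp only [φ, Unitary.conjStarAlgAut_apply]
    rw [Matrix.trace_mul_comm, ← mul_assoc]
    simp
  rw [hpe, ← star_eq_conjTranspose, ← map_star] at this
  nth_rewrite 1 [hs] at this
  rw [← map_mul, ← map_mul, htrace, star_eq_conjTranspose, diagonal_conjTranspose,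
    diagonal_mul_diagonal, diagonal_mul_diagonal, trace_diagonal] at this
  have h2 := (Complex.le_def.1 this).1
  rw [Complex.re_sum] at h2
  have : ∑ i, (ev i * ((star fun i => if ev i = ev k then (1:ℂ) else 0) i *
      (if ev i = ev k then 1 else 0))).re < 0 := by
    apply Finset.sum_neg' 
    · intro i _
      by_cases hi : ev i = ev k
      · simp [hi]; simpa [ev] using hk'.le
      · simp [hi]
    · exact ⟨k, Finset.mem_univ _, by simpa [ev] using hk'⟩
  simp at h2 this
  linarith

lemma uniq_of_star {n : Type*} [Fintype n] [DecidableEq n]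
    (S : Subalgebra ℂ (Matrix n n ℂ)) (hS : ∀ c ∈ S, cᴴ ∈ S) (x : Matrix n n ℂ) (hx : x ∈ S)
    (h : ∀ c ∈ S, Matrix.trace (x * c) = 0) : x = 0 :=
  trace_mul_conjTranspose_self_eq_zero_iff.1 (h _ (hS x hx))

lemma riesz_of_star {n : Type*} [Fintype n] [DecidableEq n]
    (S : Subalgebra ℂ (Matrix n n ℂ)) (hS : ∀ c ∈ S, cᴴ ∈ S) (F : Matrix n n ℂ →ₗ[ℂ] ℂ) :
    ∃ σ ∈ S, ∀ c ∈ S, Matrix.trace (σ * c) = F c := by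
  let L : S →ₗ[ℂ] Module.Dual ℂ S := LinearMap.mk₂ ℂ (fun x y => Matrix.trace (x.1 * y.1))
    (by intros; simp [add_mul]) (by intros; simp)
    (by intros; simp [mul_add]) (by intros; simp)
  have hinj : Function.Injective L := by
    rw [injective_iff_map_eq_zero]
    intro x hx
    apply Subtype.ext
    refine uniq_of_star S hS x.1 x.2 fun c hc => ?_
    simpa [L] using LinearMap.congr_fun hx ⟨c, hc⟩
  have hsurj := (LinearMap.injective_iff_surjective_of_finrank_eq_finrank
    (Subspace.dual_finrank_eq (K := ℂ) (V := S)).symm).1 hinj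
  obtain ⟨σ, hσ⟩ := hsurj (F ∘ₗ S.val.toLinearMap)
  refine ⟨σ.1, σ.2, fun c hc => ?_⟩
  simpa [L] using LinearMap.congr_fun hσ ⟨c, hc⟩

/-- The linear map sending `x ⊗ y` to `x * y`. -/
def mulMap (ι : Type*) [Fintype ι] : Matrix (ι × ι) (ι × ι) ℂ →ₗ[ℂ] Matrix ι ι ℂ where
  toFun X := fun i l => ∑ j, X (i, j) (j, l)
  map_add' X Y := by
    funext i l
    exact Finset.sum_add_distrib
  map_smul' r X := by
    funext i l
    exact (Finset.mul_sum _ _ _).symm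

lemma mulMap_kron {ι : Type*} [Fintype ι] (x y : Matrix ι ι ℂ) :
    mulMap ι (x ⊗ₖ y) = x * y := by
  funext i l; rfl

lemma ptA_kron {ι : Type*} (x y : Matrix ι ι ℂ) : ptA (x ⊗ₖ y) = xᵀ ⊗ₖ y := by
  ext p q; simp [ptA]

lemma trace_ptA_mul {ι : Type*} [Fintype ι] (X Y : Matrix (ι × ι) (ι × ι) ℂ) :
    Matrix.trace (ptA X * Y) = Matrix.trace (X * ptA Y) := by
  simp only [Matrix.trace, Matrix.diag, Matrix.mul_apply, ptA, Fintype.sum_prod_type]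
  rw [Finset.sum_comm]
  conv_rhs => rw [Finset.sum_comm]
  refine Finset.sum_congr rfl fun b _ => ?_
  rw [Finset.sum_comm]

lemma listProd_append {α ι : Type*} [Fintype ι] [DecidableEq ι] (A : α → Matrix ι ι ℂ)
    (s t : List α) : listProd A (s ++ t) = listProd A s * listProd A t := by
  simp [listProd]

lemma listProd_transpose {α ι : Type*} [Fintype ι] [DecidableEq ι] (A : α → Matrix ι ι ℂ)
    (h : ∀ i, (A i)ᵀ = A i) (s : List α) : (listProd A s)ᵀ = listProd A s.reverse := by
  simp [listProd, Matrix.transpose_list_prod, Function.comp_def, h]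

lemma listProd_conjTranspose {α ι : Type*} [Fintype ι] [DecidableEq ι] (A : α → Matrix ι ι ℂ)
    (h : ∀ i, (A i)ᴴ = A i) (s : List α) : (listProd A s)ᴴ = listProd A s.reverse := by
  simp [listProd, Matrix.conjTranspose_list_prod, Function.comp_def, h]

lemma listProd_comm {α β ι : Type*} [Fintype ι] [DecidableEq ι] (A : α → Matrix ι ι ℂ)
    (B : β → Matrix ι ι ℂ) (h : ∀ i j, A i * B j = B j * A i) (s : List α) (t : List β) :
    Commute (listProd A s) (listProd B t) := by
  apply Commute.list_prod_left
  intro x hx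
  apply Commute.list_prod_right
  intro y hy
  obtain ⟨i, -, rfl⟩ := List.mem_map.1 hx
  obtain ⟨j, -, rfl⟩ := List.mem_map.1 hy
  exact h i j

lemma core {ι α β : Type*} [Fintype ι] [DecidableEq ι]
    (ρt : Matrix ι ι ℂ) (hρ : ρt.PosSemidef) (htr : Matrix.trace ρt = 1)
    (At : α → Matrix ι ι ℂ) (Bt : β → Matrix ι ι ℂ)
    (hAH : ∀ i, (At i)ᴴ = At i) (hBH : ∀ j, (Bt j)ᴴ = Bt j)
    (hAsym : ∀ i, (At i)ᵀ = At i)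
    (hcomm : ∀ i j, At i * Bt j = Bt j * At i)
    (hppt : ∀ (s : List α) (t : List β),
      Matrix.trace (ρt * listProd At s * listProd Bt t) =
        Matrix.trace (ρt * listProd At s.reverse * listProd Bt t)) :
    ∃ σ : Matrix (ι × ι) (ι × ι) ℂ, σ.PosSemidef ∧ Matrix.trace σ = 1 ∧ ptA σ = σ ∧
      ∀ i j, Matrix.trace (σ * (At i ⊗ₖ Bt j)) = Matrix.trace (ρt * (At i * Bt j)) := by
  let g : List α × List β → Matrix (ι × ι) (ι × ι) ℂ :=
    fun st => listProd At st.1 ⊗ₖ listProd Bt st.2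
  let C := Submodule.span ℂ (Set.range g)
  have hg : ∀ s t, listProd At s ⊗ₖ listProd Bt t ∈ C := fun s t =>
    Submodule.subset_span ⟨(s, t), rfl⟩
  have hone : (1 : Matrix (ι × ι) (ι × ι) ℂ) ∈ C := by
    have := hg [] []
    simpa [listProd] using this
  have hmul : ∀ x y, x ∈ C → y ∈ C → x * y ∈ C := by
    intro x y hx hy
    induction hx, hy using Submodule.span_induction₂ with
    | mem_mem x y hx hy =>
      obtain ⟨⟨s, t⟩, rfl⟩ := hx
      obtain ⟨⟨s', t'⟩, rfl⟩ := hy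
      simp only [g]
      rw [← mul_kronecker_mul, ← listProd_append, ← listProd_append]
      exact hg _ _
    | zero_left y hy => simp
    | zero_right x hx => simp
    | add_left x y z hx hy hz h1 h2 => rw [add_mul]; exact C.add_mem h1 h2
    | add_right x y z hx hy hz h1 h2 => rw [mul_add]; exact C.add_mem h1 h2
    | smul_left r x y hx hy h => rw [smul_mul_assoc]; exact C.smul_mem _ h
    | smul_right r x y hx hy h => rw [mul_smul_comm]; exact C.smul_mem _ h
  have hΦmul : ∀ x y, x ∈ C → y ∈ C → mulMap ι (x * y) = mulMap ι x * mulMap ι y := by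
    intro x y hx hy
    induction hx, hy using Submodule.span_induction₂ with
    | mem_mem x y hx hy =>
      obtain ⟨⟨s, t⟩, rfl⟩ := hx
      obtain ⟨⟨s', t'⟩, rfl⟩ := hy
      simp only [g]
      rw [← mul_kronecker_mul, mulMap_kron, mulMap_kron, mulMap_kron]
      have := (listProd_comm At Bt hcomm s' t).eq
      simp only [mul_assoc]
      rw [← mul_assoc (listProd At s'), this, mul_assoc]
    | zero_left y hy => simp
    | zero_right x hx => simp
    | add_left x y z hx hy hz h1 h2 => simp only [add_mul, map_add, h1, h2]
    | add_right x y z hx hy hz h1 h2 => simp only [mul_add, map_add, h1, h2]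
    | smul_left r x y hx hy h => simp only [smul_mul_assoc, map_smul, h]
    | smul_right r x y hx hy h => simp only [mul_smul_comm, map_smul, h]
  have hstar : ∀ x, x ∈ C → xᴴ ∈ C := by
    intro x hx
    induction hx using Submodule.span_induction with
    | mem x hx =>
      obtain ⟨⟨s, t⟩, rfl⟩ := hx
      simp only [g]
      rw [conjTranspose_kronecker, listProd_conjTranspose At hAH, listProd_conjTranspose Bt hBH]
      exact hg _ _
    | zero => simp
    | add x y hx hy h1 h2 => rw [conjTranspose_add]; exact C.add_mem h1 h2
    | smul r x hx h => rw [conjTranspose_smul]; exact C.smul_mem _ h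
  have hΦstar : ∀ x, x ∈ C → mulMap ι xᴴ = (mulMap ι x)ᴴ := by
    intro x hx
    induction hx using Submodule.span_induction with
    | mem x hx =>
      obtain ⟨⟨s, t⟩, rfl⟩ := hx
      simp only [g]
      rw [conjTranspose_kronecker, mulMap_kron, mulMap_kron, conjTranspose_mul,
        listProd_conjTranspose At hAH, listProd_conjTranspose Bt hBH]
      exact (listProd_comm At Bt hcomm _ _).eq
    | zero => simp
    | add x y hx hy h1 h2 => simp only [conjTranspose_add, map_add, h1, h2]
    | smul r x hx h => simp only [conjTranspose_smul, map_smul, h]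
  have hptC : ∀ x, x ∈ C → ptA x ∈ C := by
    intro x hx
    induction hx using Submodule.span_induction with
    | mem x hx =>
      obtain ⟨⟨s, t⟩, rfl⟩ := hx
      simp only [g]
      rw [ptA_kron, listProd_transpose At hAsym]
      exact hg _ _
    | zero => exact C.zero_mem
    | add x y hx hy h1 h2 => exact C.add_mem h1 h2
    | smul r x hx h => exact C.smul_mem r h
  let F : Matrix (ι × ι) (ι × ι) ℂ →ₗ[ℂ] ℂ :=
    Matrix.traceLinearMap ι ℂ ℂ ∘ₗ LinearMap.mulLeft ℂ ρt ∘ₗ mulMap ι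
  have hF : ∀ x, F x = Matrix.trace (ρt * mulMap ι x) := fun x => rfl
  have hFpt : ∀ x, x ∈ C → F (ptA x) = F x := by
    intro x hx
    induction hx using Submodule.span_induction with
    | mem x hx =>
      obtain ⟨⟨s, t⟩, rfl⟩ := hx
      simp only [g]
      rw [ptA_kron, listProd_transpose At hAsym, hF, hF, mulMap_kron, mulMap_kron, ← mul_assoc,
        ← mul_assoc, hppt s t]
    | zero => rfl
    | add x y hx hy h1 h2 =>
      rw [map_add, ← h1, ← h2, ← map_add]; rfl
    | smul r x hx h => rw [map_smul, ← h, ← map_smul]; rfl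
  let S : Subalgebra ℂ (Matrix (ι × ι) (ι × ι) ℂ) := C.toSubalgebra hone hmul
  obtain ⟨σ, hσS, hσ⟩ := riesz_of_star S hstar F
  have hH : σᴴ = σ := by
    rw [← sub_eq_zero]
    refine uniq_of_star S hstar _ (S.sub_mem (hstar _ hσS) hσS) fun c hc => ?_
    rw [sub_mul, trace_sub, sub_eq_zero, hσ c hc]
    have h1 := hσ _ (hstar c hc)
    rw [hF, hΦstar c hc] at h1
    have h2 := congrArg star h1
    rw [← trace_conjTranspose, ← trace_conjTranspose, conjTranspose_mul, conjTranspose_mul,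
      conjTranspose_conjTranspose, conjTranspose_conjTranspose, hρ.isHermitian.eq,
      trace_mul_comm, trace_mul_comm _ ρt] at h2
    rw [h2, hF]
  have hpt : ptA σ = σ := by
    rw [← sub_eq_zero]
    refine uniq_of_star S hstar _ (S.sub_mem (hptC _ hσS) hσS) fun c hc => ?_
    rw [sub_mul, trace_sub, sub_eq_zero, trace_ptA_mul, hσ c hc, hσ _ (hptC c hc), hFpt c hc]
  refine ⟨σ, ?_, ?_, hpt, ?_⟩
  · refine psd_of_subalgebra S σ hσS hH fun c hc => ?_
    rw [hσ _ (S.mul_mem (hstar c hc) hc), hF, hΦmul _ _ (hstar c hc) hc, hΦstar c hc,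
      ← mul_assoc, trace_mul_comm, ← mul_assoc]
    exact (hρ.mul_mul_conjTranspose_same _).trace_nonneg
  · have := hσ 1 hone
    rw [mul_one] at this
    have h1 : mulMap ι (1 : Matrix (ι × ι) (ι × ι) ℂ) = 1 := by
      rw [← one_kronecker_one, mulMap_kron, mul_one]
    rw [this, hF, h1, mul_one, htr]
  · intro i j
    have : At i ⊗ₖ Bt j ∈ C := by simpa [listProd] using hg [i] [j]
    rw [hσ _ this, hF, mulMap_kron]

/-- Proposition 2, converse direction, finite dimensions: a commutative
PPT quantum representation in finite dimensions yields a tensor-product PPT quantum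
representation reproducing the same expectation values. -/
theorem commutative_PPT_gives_tensorProduct_PPT
    {ι α β : Type*} [Fintype ι] [Nonempty ι] [DecidableEq ι]
    (ρt : Matrix ι ι ℂ) (hρ : ρt.PosSemidef) (htr : Matrix.trace ρt = 1)
    (hreal : ∀ p q, (ρt p q).im = 0)
    (At : α → Matrix ι ι ℂ) (Bt : β → Matrix ι ι ℂ)
    (hAreal : ∀ i p q, ((At i) p q).im = 0) (hBreal : ∀ j p q, ((Bt j) p q).im = 0)
    (hAsym : ∀ i, (At i)ᵀ = At i) (hBsym : ∀ j, (Bt j)ᵀ = Bt j)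
    (hAidem : ∀ i, At i * At i = At i) (hBidem : ∀ j, Bt j * Bt j = Bt j)
    (hcomm : ∀ i j, At i * Bt j = Bt j * At i)
    (hppt : ∀ (s : List α) (t : List β),
      Matrix.trace (ρt * listProd At s * listProd Bt t) =
        Matrix.trace (ρt * listProd At s.reverse * listProd Bt t)) :
    ∃ (dA dB : ℕ), 0 < dA ∧ 0 < dB ∧
    ∃ (ρ : Matrix (Fin dA × Fin dB) (Fin dA × Fin dB) ℂ)
      (A : α → Matrix (Fin dA) (Fin dA) ℂ) (B : β → Matrix (Fin dB) (Fin dB) ℂ),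
      ρ.PosSemidef ∧ Matrix.trace ρ = 1 ∧ (ptA ρ).PosSemidef ∧
      (∀ i, (A i).IsHermitian ∧ A i * A i = A i) ∧
      (∀ j, (B j).IsHermitian ∧ B j * B j = B j) ∧
      (∀ i j, Matrix.trace (ρ * ((A i) ⊗ₖ (B j))) = Matrix.trace (ρt * (At i * Bt j))) := by
  have hH : ∀ M : Matrix ι ι ℂ, (∀ p q, (M p q).im = 0) → Mᵀ = M → Mᴴ = M := by
    intro M h1 h2
    ext p q
    have := congrFun (congrFun h2 p) q
    rw [transpose_apply] at this
    rw [conjTranspose_apply, this]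
    exact Complex.conj_eq_iff_im.2 (h1 p q)
  have hAH := fun i => hH (At i) (hAreal i) (hAsym i)
  have hBH := fun j => hH (Bt j) (hBreal j) (hBsym j)
  obtain ⟨σ, h1, h2, h3, h4⟩ := core ρt hρ htr At Bt hAH hBH hAsym hcomm hppt
  let e : Fin (Fintype.card ι) ≃ ι := (Fintype.equivFin ι).symm
  have hpt : ptA (σ.submatrix (e.prodCongr e) (e.prodCongr e)) =
      σ.submatrix (e.prodCongr e) (e.prodCongr e) := by
    conv_rhs => rw [← h3]
    rfl
  refine ⟨Fintype.card ι, Fintype.card ι, Fintype.card_pos, Fintype.card_pos,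
    σ.submatrix (e.prodCongr e) (e.prodCongr e), fun i => (At i).submatrix e e,
    fun j => (Bt j).submatrix e e, h1.submatrix _, ?_, ?_, ?_, ?_, ?_⟩
  · rw [← h2]
    exact Equiv.sum_comp (e.prodCongr e) (fun p => σ p p)
  · rw [hpt]; exact h1.submatrix _
  · intro i
    refine ⟨IsHermitian.submatrix (hAH i) _, ?_⟩
    rw [submatrix_mul_equiv, hAidem]
  · intro j
    refine ⟨IsHermitian.submatrix (hBH j) _, ?_⟩
    rw [submatrix_mul_equiv, hBidem]
  · intro i j
    have hk : (At i).submatrix e e ⊗ₖ (Bt j).submatrix e e =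
        (At i ⊗ₖ Bt j).submatrix (e.prodCongr e) (e.prodCongr e) := rfl
    rw [hk, submatrix_mul_equiv, ← h4]
    exact Equiv.sum_comp (e.prodCongr e) (fun p => (σ * (At i ⊗ₖ Bt j)) p p)
end

section
/- Device-independent negativity bound for the CHSH inequality: let ρ be a bipartite quantum state on ι_A × ι_B (finite nonempty types of arbitrary size), let A₁, A₂ be dichotomic observables on ι_A and B₁, B₂ dichotomic observables on ι_B, and let v be the CHSH value of ρ with these observables. Then the negativity of ρ satisfies N(ρ) ≥ (v − 2)/(4·√2 − 4). -/
open Matrix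
open scoped Kronecker ComplexOrder

open Polynomial in
lemma aeval_spectral {n : Type*} [Fintype n] [DecidableEq n] {X : Matrix n n ℂ}
    (hX : X.IsHermitian) (P : ℝ[X]) :
    aeval X P = (hX.eigenvectorUnitary : Matrix n n ℂ) *
      diagonal (fun i => ((P.eval (hX.eigenvalues i) : ℝ) : ℂ)) *
      (hX.eigenvectorUnitary : Matrix n n ℂ)ᴴ := by
  have h1 : X = Unitary.conjStarAlgAut ℝ _ hX.eigenvectorUnitary
      (diagonalAlgHom ℝ (fun i => ((hX.eigenvalues i : ℝ) : ℂ))) := by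
    conv_lhs => rw [hX.spectral_theorem]
    rw [Unitary.conjStarAlgAut_apply, Unitary.conjStarAlgAut_apply]
    rfl
  conv_lhs => rw [h1]
  rw [aeval_algHom_apply, aeval_algHom_apply, Unitary.conjStarAlgAut_apply]
  have h2 : (aeval (fun i => ((hX.eigenvalues i : ℝ) : ℂ)) P : n → ℂ) =
      fun i => ((P.eval (hX.eigenvalues i) : ℝ) : ℂ) := by
    funext i
    have := aeval_algHom_apply (Pi.evalAlgHom ℝ (fun _ : n => ℂ) i)
      (fun i => ((hX.eigenvalues i : ℝ) : ℂ)) P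
    simp only [Pi.evalAlgHom_apply] at this
    rw [← this]
    exact aeval_algebraMap_apply ℂ (hX.eigenvalues i) P
  rw [h2]
  rfl

open Polynomial in
lemma aeval_psd {n : Type*} [Fintype n] [DecidableEq n] {X : Matrix n n ℂ}
    (hX : X.IsHermitian) (P : ℝ[X]) (h : ∀ i, 0 ≤ P.eval (hX.eigenvalues i)) :
    (aeval X P).PosSemidef := by
  rw [aeval_spectral hX]
  apply PosSemidef.mul_mul_conjTranspose_same
  rw [posSemidef_diagonal_iff]
  intro i
  exact_mod_cast h i

open Polynomial in
lemma eval_of_psd {n : Type*} [Fintype n] [DecidableEq n] {X : Matrix n n ℂ}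
    (hX : X.IsHermitian) (P : ℝ[X]) (h : (aeval X P).PosSemidef) (i : n) :
    0 ≤ P.eval (hX.eigenvalues i) := by
  have hU : (hX.eigenvectorUnitary : Matrix n n ℂ)ᴴ * (hX.eigenvectorUnitary : Matrix n n ℂ) = 1 :=
    Unitary.coe_star_mul_self hX.eigenvectorUnitary
  have h2 := h.conjTranspose_mul_mul_same (hX.eigenvectorUnitary : Matrix n n ℂ)
  rw [aeval_spectral hX] at h2
  have h3 : (hX.eigenvectorUnitary : Matrix n n ℂ)ᴴ * ((hX.eigenvectorUnitary : Matrix n n ℂ) *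
      diagonal (fun i => ((P.eval (hX.eigenvalues i) : ℝ) : ℂ)) *
      (hX.eigenvectorUnitary : Matrix n n ℂ)ᴴ) * (hX.eigenvectorUnitary : Matrix n n ℂ) =
      diagonal (fun i => ((P.eval (hX.eigenvalues i) : ℝ) : ℂ)) := by
    rw [Matrix.mul_assoc, Matrix.mul_assoc, Matrix.mul_assoc, hU, ← Matrix.mul_assoc, hU]
    simp
  rw [h3, posSemidef_diagonal_iff] at h2
  exact_mod_cast h2 i

/-- trace of a Hermitian matrix against a matrix between `0` and `c`. -/
lemma trace_ge_neg {n : Type*} [Fintype n] [DecidableEq n] {σ W : Matrix n n ℂ}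
    (hσ : σ.IsHermitian) (c : ℝ) (h0 : W.PosSemidef) (h1 : ((c : ℂ) • (1 : Matrix n n ℂ) - W).PosSemidef) :
    -c * (∑ i, max 0 (-(hσ.eigenvalues i))) ≤ (trace (σ * W)).re := by
  have hU : (hσ.eigenvectorUnitary : Matrix n n ℂ)ᴴ * (hσ.eigenvectorUnitary : Matrix n n ℂ) = 1 :=
    Unitary.coe_star_mul_self hσ.eigenvectorUnitary
  set U : Matrix n n ℂ := (hσ.eigenvectorUnitary : Matrix n n ℂ) with hUdef
  have hs : σ = U * diagonal (fun i => ((hσ.eigenvalues i : ℝ) : ℂ)) * Uᴴ := by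
    conv_lhs => rw [hσ.spectral_theorem, Unitary.conjStarAlgAut_apply]
    rfl
  have e0 := h0.conjTranspose_mul_mul_same U
  have e1 := h1.conjTranspose_mul_mul_same U
  have e2 : Uᴴ * ((c : ℂ) • (1 : Matrix n n ℂ) - W) * U = (c : ℂ) • (1 : Matrix n n ℂ) - Uᴴ * W * U := by
    rw [Matrix.mul_sub, Matrix.sub_mul]
    simp [hU]
  rw [e2] at e1
  have ht : trace (σ * W) = ∑ i, ((hσ.eigenvalues i : ℝ) : ℂ) * (Uᴴ * W * U) i i := by
    conv_lhs => rw [hs]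
    rw [Matrix.mul_assoc, Matrix.mul_assoc, trace_mul_comm, Matrix.mul_assoc, trace]
    simp [diagonal_mul]
  rw [ht, Complex.re_sum, Finset.mul_sum]
  apply Finset.sum_le_sum
  intro i _
  have a0 := e0.diag_nonneg (i := i)
  have a1 := e1.diag_nonneg (i := i)
  rw [Complex.le_def] at a0 a1
  have b0 := a0.1
  have b1 := a1.1
  simp at b1
  rw [Complex.re_ofReal_mul]
  simp at b0
  rcases le_total 0 (hσ.eigenvalues i) with h | h
  · rw [max_eq_left (by linarith)]
    have := mul_nonneg h b0
    linarith
  · rw [max_eq_right (by linarith)]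
    nlinarith

lemma trace_psd_mul {n : Type*} [Fintype n] [DecidableEq n] {ρ S : Matrix n n ℂ}
    (hρ : ρ.PosSemidef) (hS : S.PosSemidef) : 0 ≤ (trace (ρ * S)).re := by
  have hU : (hρ.isHermitian.eigenvectorUnitary : Matrix n n ℂ)ᴴ * (hρ.isHermitian.eigenvectorUnitary : Matrix n n ℂ) = 1 :=
    Unitary.coe_star_mul_self hρ.isHermitian.eigenvectorUnitary
  set U : Matrix n n ℂ := (hρ.isHermitian.eigenvectorUnitary : Matrix n n ℂ) with hUdef
  have hs : ρ = U * diagonal (fun i => ((hρ.isHermitian.eigenvalues i : ℝ) : ℂ)) * Uᴴ := by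
    conv_lhs => rw [hρ.isHermitian.spectral_theorem, Unitary.conjStarAlgAut_apply]
    rfl
  have e0 := hS.conjTranspose_mul_mul_same U
  have ht : trace (ρ * S) = ∑ i, ((hρ.isHermitian.eigenvalues i : ℝ) : ℂ) * (Uᴴ * S * U) i i := by
    conv_lhs => rw [hs]
    rw [Matrix.mul_assoc, Matrix.mul_assoc, trace_mul_comm, Matrix.mul_assoc, trace]
    simp [diagonal_mul]
  rw [ht, Complex.re_sum]
  apply Finset.sum_nonneg
  intro i _
  have a0 := e0.diag_nonneg (i := i)
  rw [Complex.le_def] at a0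
  rw [Complex.re_ofReal_mul]
  exact mul_nonneg (hρ.eigenvalues_nonneg i) a0.1

set_option linter.unusedSectionVars false

section
variable {ιA ιB : Type*} [Fintype ιA] [Fintype ιB] [DecidableEq ιA] [DecidableEq ιB]

lemma ptA_hermitian {ρ : Matrix (ιA × ιB) (ιA × ιB) ℂ} (h : ρ.IsHermitian) : (ptA ρ).IsHermitian := by
  ext p q
  exact h.apply (q.1, p.2) (p.1, q.2)

lemma trace_ptA (ρ W : Matrix (ιA × ιB) (ιA × ιB) ℂ) :
    trace (ptA ρ * W) = trace (ρ * ptA W) := by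
  simp only [trace, Matrix.mul_apply, diag_apply, ptA, Fintype.sum_prod_type]
  have : ∀ f : ιA → ιB → ιA → ιB → ℂ, ∑ a, ∑ b, ∑ c, ∑ d, f a b c d = ∑ c, ∑ b, ∑ a, ∑ d, f a b c d := by
    intro f
    calc _ = ∑ b, ∑ a, ∑ c, ∑ d, f a b c d := Finset.sum_comm
      _ = ∑ b, ∑ c, ∑ a, ∑ d, f a b c d := Finset.sum_congr rfl fun b _ => Finset.sum_comm
      _ = _ := Finset.sum_comm
  rw [this]

/-- partial transpose as a linear map -/
def ptAL : Matrix (ιA × ιB) (ιA × ιB) ℂ →ₗ[ℝ] Matrix (ιA × ιB) (ιA × ιB) ℂ where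
  toFun := ptA
  map_add' _ _ := rfl
  map_smul' _ _ := rfl


lemma ptAL_kron (A : Matrix ιA ιA ℂ) (B : Matrix ιB ιB ℂ) : ptAL (A ⊗ₖ B) = Aᵀ ⊗ₖ B := rfl

lemma kron_pow (A : Matrix ιA ιA ℂ) (B : Matrix ιB ιB ℂ) (n : ℕ) : (A ⊗ₖ B) ^ n = (A ^ n) ⊗ₖ (B ^ n) := by
  induction n with
  | zero => simp
  | succ n ih => rw [pow_succ, ih, ← mul_kronecker_mul, pow_succ, pow_succ]

open Polynomial in
lemma ptAL_aeval (C : Matrix ιA ιA ℂ) (D : Matrix ιB ιB ℂ) (p : ℝ[X]) :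
    ptAL (aeval (Cᵀ ⊗ₖ D) p) = aeval (C ⊗ₖ D) p := by
  induction p using Polynomial.induction_on' with
  | add p q hp hq => simp only [map_add, hp, hq]
  | monomial n a =>
    rw [← C_mul_X_pow_eq_monomial, ← smul_eq_C_mul, map_smul, map_smul, map_smul]
    simp only [map_pow, aeval_X]
    rw [kron_pow, kron_pow, ptAL_kron, ← transpose_pow, transpose_transpose]

open Polynomial in
lemma ptAL_mul_aeval (A C : Matrix ιA ιA ℂ) (B D : Matrix ιB ιB ℂ) (h : C * A = -(A * C)) (p : ℝ[X]) :
    ptAL ((Aᵀ ⊗ₖ B) * aeval (Cᵀ ⊗ₖ D) p) = (A ⊗ₖ B) * aeval (-(C ⊗ₖ D)) p := by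
  have hn : ∀ n : ℕ, C ^ n * A = (-1 : ℂ) ^ n • (A * C ^ n) := by
    intro n
    induction n with
    | zero => simp
    | succ n ih =>
      rw [pow_succ, Matrix.mul_assoc, h, Matrix.mul_neg, ← Matrix.mul_assoc, ih, pow_succ, Matrix.smul_mul, Matrix.mul_assoc]
      simp
  induction p using Polynomial.induction_on' with
  | add p q hp hq => simp only [map_add, Matrix.mul_add, hp, hq]
  | monomial n a =>
    rw [← C_mul_X_pow_eq_monomial, ← smul_eq_C_mul, map_smul, map_smul, Matrix.mul_smul, map_smul, Matrix.mul_smul]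
    simp only [map_pow, aeval_X]
    congr 1
    have e : (-(C ⊗ₖ D)) ^ n = (-1 : ℂ) ^ n • ((C ^ n) ⊗ₖ (D ^ n)) := by
      rw [← kron_pow, ← _root_.smul_pow]; simp
    rw [e, kron_pow, ← mul_kronecker_mul, ptAL_kron, ← transpose_pow, ← transpose_mul, transpose_transpose,
      Matrix.mul_smul, ← mul_kronecker_mul, hn, smul_kronecker]

/-- The CHSH operator. -/
def chshOp (A₁ A₂ : Matrix ιA ιA ℂ) (B₁ B₂ : Matrix ιB ιB ℂ) : Matrix (ιA × ιB) (ιA × ιB) ℂ :=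
  A₁ ⊗ₖ B₁ + A₁ ⊗ₖ B₂ + A₂ ⊗ₖ B₁ - A₂ ⊗ₖ B₂

lemma chshOp_sq (A₁ A₂ : Matrix ιA ιA ℂ) (B₁ B₂ : Matrix ιB ιB ℂ)
    (hA₁d : A₁ * A₁ = 1) (hA₂d : A₂ * A₂ = 1) (hB₁d : B₁ * B₁ = 1) (hB₂d : B₂ * B₂ = 1) :
    chshOp A₁ A₂ B₁ B₂ * chshOp A₁ A₂ B₁ B₂ =
      4 - (A₁ * A₂ - A₂ * A₁) ⊗ₖ (B₁ * B₂ - B₂ * B₁) := by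
  have e : ∀ (a b : Matrix ιA ιA ℂ) (c d : Matrix ιB ιB ℂ), (a - b) ⊗ₖ (c - d) =
      a ⊗ₖ c - a ⊗ₖ d - b ⊗ₖ c + b ⊗ₖ d := by
    intro a b c d; ext i j; simp [kroneckerMap_apply]; ring
  rw [e]
  simp only [chshOp, Matrix.add_mul, Matrix.mul_add, Matrix.sub_mul, Matrix.mul_sub, ← mul_kronecker_mul,
    hA₁d, hA₂d, hB₁d, hB₂d, one_kronecker_one]
  have : (4 : Matrix (ιA × ιB) (ιA × ιB) ℂ) = 1 + 1 + 1 + 1 := by norm_num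
  rw [this]
  abel

lemma chshOp_herm {A₁ A₂ : Matrix ιA ιA ℂ} {B₁ B₂ : Matrix ιB ιB ℂ}
    (hA₁ : A₁.IsHermitian) (hA₂ : A₂.IsHermitian)
    (hB₁ : B₁.IsHermitian) (hB₂ : B₂.IsHermitian) : (chshOp A₁ A₂ B₁ B₂).IsHermitian := by
  have : ∀ {A : Matrix ιA ιA ℂ} {B : Matrix ιB ιB ℂ}, A.IsHermitian → B.IsHermitian → (A ⊗ₖ B).IsHermitian := by
    intro A B hA hB
    rw [IsHermitian, conjTranspose_kronecker, hA.eq, hB.eq]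
  exact (((this hA₁ hB₁).add (this hA₁ hB₂)).add (this hA₂ hB₁)).sub (this hA₂ hB₂)

open Polynomial in
lemma chshOp_eig {A₁ A₂ : Matrix ιA ιA ℂ} {B₁ B₂ : Matrix ιB ιB ℂ}
    (hA₁ : A₁.IsHermitian) (hA₂ : A₂.IsHermitian)
    (hB₁ : B₁.IsHermitian) (hB₂ : B₂.IsHermitian)
    (hA₁d : A₁ * A₁ = 1) (hA₂d : A₂ * A₂ = 1) (hB₁d : B₁ * B₁ = 1) (hB₂d : B₂ * B₂ = 1)
    (hX : (chshOp A₁ A₂ B₁ B₂).IsHermitian) (i : ιA × ιB) : hX.eigenvalues i ^ 2 ≤ 8 := by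
  have h1 := chshOp_sq A₁ A₂ B₁ B₂ hA₁d hA₂d hB₁d hB₂d
  have h2 := chshOp_sq A₁ A₂ B₂ B₁ hA₁d hA₂d hB₂d hB₁d
  have e : ∀ (a : Matrix ιA ιA ℂ) (c d : Matrix ιB ιB ℂ), a ⊗ₖ (c - d) = - (a ⊗ₖ (d - c)) := by
    intro a c d; ext i j; simp [kroneckerMap_apply]; ring
  rw [e] at h2
  have h3 : aeval (chshOp A₁ A₂ B₁ B₂) (8 - X ^ 2 : ℝ[X]) =
      chshOp A₁ A₂ B₂ B₁ * (chshOp A₁ A₂ B₂ B₁)ᴴ := by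
    rw [(chshOp_herm hA₁ hA₂ hB₂ hB₁).eq, h2]
    simp only [map_sub, map_pow, aeval_X, map_ofNat]
    rw [pow_two, h1]
    have : (8 : Matrix (ιA × ιB) (ιA × ιB) ℂ) = 4 + 4 := by norm_num
    rw [this]
    abel
  have h4 := eval_of_psd hX (8 - X ^ 2 : ℝ[X]) (h3 ▸ posSemidef_self_mul_conjTranspose _) i
  simp at h4
  exact h4
end

/-- scalar profile -/
noncomputable def pf (m : ℝ) : ℝ := max 0 (Real.sqrt (4 + m) - 2)
/-- scalar profile -/
noncomputable def qf (m : ℝ) : ℝ := - pf m / Real.sqrt (4 + m)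

lemma pf_qf_Y (y : ℝ) (hy : y ^ 2 ≤ 8) :
    0 ≤ pf (y ^ 2 - 4) + y * qf (y ^ 2 - 4) ∧
    pf (y ^ 2 - 4) + y * qf (y ^ 2 - 4) ≤ 4 * Real.sqrt 2 - 4 := by
  have h8 : |y| ≤ 2 * Real.sqrt 2 := by
    refine abs_le_of_sq_le_sq ?_ (by positivity)
    rw [mul_pow, Real.sq_sqrt (by norm_num)]; linarith
  have h2 : 1 ≤ Real.sqrt 2 := by rw [Real.one_le_sqrt]; norm_num
  have e : Real.sqrt (4 + (y ^ 2 - 4)) = |y| := by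
    rw [← Real.sqrt_sq_eq_abs]; ring_nf
  have hp : pf (y ^ 2 - 4) = max 0 (|y| - 2) := by rw [pf, e]
  rw [qf, e, hp]
  rcases le_total |y| 2 with h | h
  · rw [max_eq_left (by linarith)]; simp
  · rw [max_eq_right (by linarith)]
    rcases le_total 0 y with hy0 | hy0
    · rw [abs_of_nonneg hy0] at *
      have : y * (-(y - 2) / y) = -(y - 2) := by field_simp
      rw [this]; constructor <;> linarith
    · rw [abs_of_nonpos hy0] at *
      have : y * (-(-y - 2) / -y) = (-y - 2) := by
        have : y ≠ 0 := by intro h; linarith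
        field_simp
      rw [this]; constructor <;> linarith

lemma pf_qf_X (x : ℝ) (hx : x ^ 2 ≤ 8) :
    pf (4 - x ^ 2) + x * qf (x ^ 2 - 4) ≤ 2 - x := by
  have e : Real.sqrt (4 + (x ^ 2 - 4)) = |x| := by
    rw [← Real.sqrt_sq_eq_abs]; ring_nf
  have hp : pf (x ^ 2 - 4) = max 0 (|x| - 2) := by rw [pf, e]
  rw [qf, e, hp]
  have s0 := Real.sqrt_nonneg (4 + (4 - x ^ 2))
  have s1 := Real.sq_sqrt (show 0 ≤ 4 + (4 - x ^ 2) by linarith)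
  have hx2 := sq_abs x
  have hx0 := abs_nonneg x
  rw [pf]
  set s := Real.sqrt (4 + (4 - x ^ 2))
  rcases le_total |x| 2 with h | h
  · rw [max_eq_left (b := |x| - 2) (by linarith)]
    simp only [neg_zero, zero_div, mul_zero, add_zero]
    apply max_le
    · linarith [le_abs_self x]
    · nlinarith [sq_nonneg (s - x), sq_nonneg (s + x - 4)]
  · have hs : s ≤ 2 := by nlinarith
    rw [max_eq_right (b := |x| - 2) (by linarith), max_eq_left (by linarith)]
    rcases le_total 0 x with hy0 | hy0
    · rw [abs_of_nonneg hy0] at *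
      have : x * (-(x - 2) / x) = -(x - 2) := by field_simp
      rw [this]; linarith
    · rw [abs_of_nonpos hy0] at *
      have : x * (-(-x - 2) / -x) = (-x - 2) := by
        have : x ≠ 0 := by intro h; linarith
        field_simp
      rw [this]; linarith

/-- device-independent negativity bound for CHSH. Any bipartite quantum
state attaining CHSH value v has negativity at least (v - 2)/(4√2 - 4). -/
theorem chsh_negativity_bound
    {ιA ιB : Type*} [Fintype ιA] [Fintype ιB] [Nonempty ιA] [Nonempty ιB]
    [DecidableEq ιA] [DecidableEq ιB]
    (ρ : Matrix (ιA × ιB) (ιA × ιB) ℂ) (hρ : ρ.PosSemidef) (htr : Matrix.trace ρ = 1)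
    (A₁ A₂ : Matrix ιA ιA ℂ) (B₁ B₂ : Matrix ιB ιB ℂ)
    (hA₁ : A₁.IsHermitian) (hA₂ : A₂.IsHermitian)
    (hB₁ : B₁.IsHermitian) (hB₂ : B₂.IsHermitian)
    (hA₁d : A₁ * A₁ = 1) (hA₂d : A₂ * A₂ = 1) (hB₁d : B₁ * B₁ = 1) (hB₂d : B₂ * B₂ = 1)
    (v : ℝ)
    (hv : v = (Matrix.trace (ρ * (A₁ ⊗ₖ B₁ + A₁ ⊗ₖ B₂ + A₂ ⊗ₖ B₁ - A₂ ⊗ₖ B₂))).re) :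
    negEig (ptA ρ) ≥ (v - 2) / (4 * Real.sqrt 2 - 4) := by
  set σ := ptA ρ with hσdef
  have hσ : σ.IsHermitian := ptA_hermitian hρ.isHermitian
  set Xo := chshOp A₁ A₂ B₁ B₂ with hXo
  set Yo := chshOp A₁ᵀ A₂ᵀ B₁ B₂ with hYo
  have tA₁ : A₁ᵀ * A₁ᵀ = 1 := by rw [← transpose_mul, hA₁d, transpose_one]
  have tA₂ : A₂ᵀ * A₂ᵀ = 1 := by rw [← transpose_mul, hA₂d, transpose_one]
  have hX : Xo.IsHermitian := chshOp_herm hA₁ hA₂ hB₁ hB₂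
  have hY : Yo.IsHermitian := chshOp_herm hA₁.transpose hA₂.transpose hB₁ hB₂
  have eX : ∀ i, hX.eigenvalues i ^ 2 ≤ 8 :=
    chshOp_eig hA₁ hA₂ hB₁ hB₂ hA₁d hA₂d hB₁d hB₂d hX
  have eY : ∀ i, hY.eigenvalues i ^ 2 ≤ 8 :=
    chshOp_eig hA₁.transpose hA₂.transpose hB₁ hB₂ tA₁ tA₂ hB₁d hB₂d hY
  set C := A₁ * A₂ - A₂ * A₁ with hC
  set D := B₁ * B₂ - B₂ * B₁ with hD
  have sX : Xo * Xo = 4 - C ⊗ₖ D := chshOp_sq A₁ A₂ B₁ B₂ hA₁d hA₂d hB₁d hB₂d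
  have sY : Yo * Yo = 4 + Cᵀ ⊗ₖ D := by
    rw [hYo, chshOp_sq _ _ _ _ tA₁ tA₂ hB₁d hB₂d, ← transpose_mul, ← transpose_mul,
      ← transpose_sub, ← neg_sub (A₁ * A₂), transpose_neg, ← hC, ← hD]
    ext i j
    simp [kroneckerMap_apply]
  have cA₁ : C * A₁ = -(A₁ * C) := by
    rw [hC, Matrix.sub_mul, Matrix.mul_sub, Matrix.mul_assoc A₂, hA₁d, ← Matrix.mul_assoc A₁ A₁,
      hA₁d, Matrix.mul_assoc]
    simp
  have cA₂ : C * A₂ = -(A₂ * C) := by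
    rw [hC, Matrix.sub_mul, Matrix.mul_sub, Matrix.mul_assoc A₁, hA₂d, ← Matrix.mul_assoc A₂ A₂,
      hA₂d, Matrix.mul_assoc]
    simp
  -- interpolation
  let E : Finset ℝ := Finset.univ.image (fun i => hX.eigenvalues i ^ 2 - 4) ∪
    Finset.univ.image (fun i => 4 - hX.eigenvalues i ^ 2) ∪
    Finset.univ.image (fun i => hY.eigenvalues i ^ 2 - 4)
  obtain ⟨p, hp⟩ : ∃ p : Polynomial ℝ, ∀ m ∈ E, p.eval m = pf m :=
    ⟨Lagrange.interpolate E id pf, fun m hm =>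
      Lagrange.eval_interpolate_at_node (v := id) pf (Set.injOn_id _) hm⟩
  obtain ⟨q, hq⟩ : ∃ q : Polynomial ℝ, ∀ m ∈ E, q.eval m = qf m :=
    ⟨Lagrange.interpolate E id qf, fun m hm =>
      Lagrange.eval_interpolate_at_node (v := id) qf (Set.injOn_id _) hm⟩
  have m1 : ∀ i, hX.eigenvalues i ^ 2 - 4 ∈ E := fun i => by simp [E]
  have m2 : ∀ i, 4 - hX.eigenvalues i ^ 2 ∈ E := fun i => by simp [E]
  have m3 : ∀ i, hY.eigenvalues i ^ 2 - 4 ∈ E := fun i => by simp [E]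
  let W := Polynomial.aeval (Cᵀ ⊗ₖ D) p + Yo * Polynomial.aeval (Cᵀ ⊗ₖ D) q
  let PW : Polynomial ℝ := p.comp (Polynomial.X ^ 2 - 4) + Polynomial.X * q.comp (Polynomial.X ^ 2 - 4)
  have hW : W = Polynomial.aeval Yo PW := by
    have : Yo ^ 2 - 4 = Cᵀ ⊗ₖ D := by rw [pow_two, sY]; abel
    simp only [W, PW, map_add, map_mul, Polynomial.aeval_X, Polynomial.aeval_comp, map_sub, map_pow,
      map_ofNat, this]
  have evW : ∀ y : ℝ, PW.eval y = p.eval (y ^ 2 - 4) + y * q.eval (y ^ 2 - 4) := by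
    intro y; simp [PW]
  have W0 : W.PosSemidef := by
    rw [hW]
    apply aeval_psd hY
    intro i
    rw [evW, hp _ (m3 i), hq _ (m3 i)]
    exact (pf_qf_Y _ (eY i)).1
  have W1 : (((4 * Real.sqrt 2 - 4 : ℝ) : ℂ) • (1 : Matrix (ιA × ιB) (ιA × ιB) ℂ) - W).PosSemidef := by
    have : ((4 * Real.sqrt 2 - 4 : ℝ) : ℂ) • (1 : Matrix (ιA × ιB) (ιA × ιB) ℂ) - W =
        Polynomial.aeval Yo (Polynomial.C (4 * Real.sqrt 2 - 4) - PW) := by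
      rw [map_sub, Polynomial.aeval_C, ← hW, Algebra.algebraMap_eq_smul_one]
      rfl
    rw [this]
    apply aeval_psd hY
    intro i
    rw [Polynomial.eval_sub, Polynomial.eval_C, evW, hp _ (m3 i), hq _ (m3 i)]
    linarith [(pf_qf_Y _ (eY i)).2]
  have hWT : ptA W = Polynomial.aeval (C ⊗ₖ D) p + Xo * Polynomial.aeval (-(C ⊗ₖ D)) q := by
    change ptAL W = _
    simp only [W, hYo, hXo, chshOp, Matrix.add_mul, Matrix.sub_mul, map_add, map_sub]
    rw [ptAL_aeval, ptAL_mul_aeval _ _ _ _ cA₁, ptAL_mul_aeval _ _ _ _ cA₁,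
      ptAL_mul_aeval _ _ _ _ cA₂, ptAL_mul_aeval _ _ _ _ cA₂]
  have S0 : ((2 : ℂ) • (1 : Matrix (ιA × ιB) (ιA × ιB) ℂ) - Xo - ptA W).PosSemidef := by
    have k1 : Xo ^ 2 - 4 = -(C ⊗ₖ D) := by rw [pow_two, sX]; abel
    have k2 : 4 - Xo ^ 2 = C ⊗ₖ D := by rw [pow_two, sX]; abel
    have : (2 : ℂ) • (1 : Matrix (ιA × ιB) (ιA × ιB) ℂ) - Xo - ptA W = Polynomial.aeval Xo
        (Polynomial.C 2 - Polynomial.X - (p.comp (4 - Polynomial.X ^ 2) +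
          Polynomial.X * q.comp (Polynomial.X ^ 2 - 4)) : Polynomial ℝ) := by
      rw [hWT, map_sub, map_sub, Polynomial.aeval_C, Algebra.algebraMap_eq_smul_one]
      simp only [map_add, map_mul, Polynomial.aeval_X, Polynomial.aeval_comp, map_sub, map_pow,
        map_ofNat, k1, k2]
      congr 2
    rw [this]
    apply aeval_psd hX
    intro i
    have := pf_qf_X _ (eX i)
    rw [← hp _ (m2 i), ← hq _ (m1 i)] at this
    simp
    linarith
  have t1 := trace_psd_mul hρ S0
  have t2 := trace_ge_neg hσ _ W0 W1
  have t3 : trace (σ * W) = trace (ρ * ptA W) := trace_ptA ρ W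
  rw [t3] at t2
  rw [Matrix.mul_sub, Matrix.mul_sub, trace_sub, trace_sub] at t1
  have hv' : v = (trace (ρ * Xo)).re := hv
  simp only [Matrix.mul_smul, Matrix.mul_one, trace_smul, htr, Complex.sub_re] at t1
  rw [← hv'] at t1
  simp at t1
  have hN : negEig σ = ∑ i, max 0 (-(hσ.eigenvalues i)) := by
    unfold negEig
    rw [dif_pos hσ]
  have h2 : 1 < Real.sqrt 2 := by rw [Real.lt_sqrt] <;> norm_num
  rw [ge_iff_le, div_le_iff₀ (by linarith), hN]
  linarith
end

section
/- Dimension bound on the negativity: let d ≤ D be positive natural numbers and let ρ be a bipartite quantum state on (Fin d) × (Fin D). Then the negativity satisfies N(ρ) ≤ (d − 1)/2. -/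
open Matrix
open scoped Kronecker ComplexOrder

lemma negEig_le_aux {ι : Type*} [Fintype ι] [DecidableEq ι] (M X : Matrix ι ι ℂ)
    (hM : M.IsHermitian) (h1 : (X - M).PosSemidef) (h2 : (X + M).PosSemidef) :
    negEig M ≤ ((X.trace).re - (M.trace).re) / 2 := by
  have hU : (hM.eigenvectorUnitary : Matrix ι ι ℂ) * (hM.eigenvectorUnitary : Matrix ι ι ℂ)ᴴ = 1 := by
    have := Unitary.coe_mul_star_self hM.eigenvectorUnitary
    simpa [Matrix.star_eq_conjTranspose] using this
  have hU' : (hM.eigenvectorUnitary : Matrix ι ι ℂ)ᴴ * (hM.eigenvectorUnitary : Matrix ι ι ℂ) = 1 := by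
    have := Unitary.coe_star_mul_self hM.eigenvectorUnitary
    simpa [Matrix.star_eq_conjTranspose] using this
  have hs := hM.spectral_theorem
  rw [Unitary.conjStarAlgAut_apply, Matrix.star_eq_conjTranspose] at hs
  generalize (hM.eigenvectorUnitary : Matrix ι ι ℂ) = U at hU hU' hs
  have hd : Uᴴ * M * U = diagonal (RCLike.ofReal ∘ hM.eigenvalues) := by
    conv_lhs => rw [hs]
    simp only [Matrix.mul_assoc, hU', Matrix.mul_one]
    rw [← Matrix.mul_assoc, hU', Matrix.one_mul]
  have hde : ∀ i, (Uᴴ * M * U) i i = (hM.eigenvalues i : ℂ) := by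
    intro i; rw [hd]; simp
  have trc : ∀ Y : Matrix ι ι ℂ, (Uᴴ * Y * U).trace = Y.trace := by
    intro Y
    rw [Matrix.trace_mul_comm, ← Matrix.mul_assoc, hU, Matrix.one_mul]
  have p1 := h1.conjTranspose_mul_mul_same U
  have p2 := h2.conjTranspose_mul_mul_same U
  unfold negEig
  rw [dif_pos hM, ← trc X, ← trc M]
  simp only [Matrix.trace, Matrix.diag, Complex.re_sum, ← Finset.sum_sub_distrib, Finset.sum_div]
  refine Finset.sum_le_sum fun i _ => ?_
  have q1 := (Complex.le_def.1 (p1.diag_nonneg (i := i))).1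
  have q2 := (Complex.le_def.1 (p2.diag_nonneg (i := i))).1
  simp only [Matrix.mul_sub, Matrix.sub_mul, Matrix.mul_add, Matrix.add_mul, Matrix.sub_apply,
    Matrix.add_apply, hde, Complex.sub_re, Complex.add_re, Complex.ofReal_re, Complex.zero_re] at q1 q2 ⊢
  apply max_le <;> linarith

/-- The matrix unit `|i⟩⟨k|` tensored with the identity. -/
def auxA (d D : ℕ) (i k : Fin d) : Matrix (Fin d × Fin D) (Fin d × Fin D) ℂ :=
  fun p q => if p = (i, q.2) then (if q.1 = k then 1 else 0) else 0

lemma auxA_apply {d D : ℕ} (ρ : Matrix (Fin d × Fin D) (Fin d × Fin D) ℂ) (i k j l : Fin d)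
    (p q : Fin d × Fin D) :
    ((auxA d D i k)ᴴ * ρ * auxA d D j l) p q =
      if p.1 = k then (if q.1 = l then ρ (i, p.2) (j, q.2) else 0) else 0 := by
  simp only [Matrix.mul_apply, auxA, Matrix.conjTranspose_apply, apply_ite star, star_one, star_zero,
    ite_mul, mul_ite, zero_mul, mul_zero, one_mul, mul_one, Finset.sum_ite_eq', Finset.mem_univ,
    if_true]
  split_ifs <;> simp

/-- The operator `1 ⊗ ρ_B`. -/
noncomputable def auxX {d D : ℕ} (ρ : Matrix (Fin d × Fin D) (Fin d × Fin D) ℂ) :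
    Matrix (Fin d × Fin D) (Fin d × Fin D) ℂ :=
  ∑ i, ∑ k, (auxA d D i k)ᴴ * ρ * auxA d D i k

lemma ptA_eq {d D : ℕ} (ρ : Matrix (Fin d × Fin D) (Fin d × Fin D) ℂ) :
    ptA ρ = ∑ i, ∑ k, (auxA d D i k)ᴴ * ρ * auxA d D k i := by
  ext p q
  simp [Matrix.sum_apply, auxA_apply, ptA]

lemma auxX_trace {d D : ℕ} (ρ : Matrix (Fin d × Fin D) (Fin d × Fin D) ℂ) :
    (auxX ρ).trace = d * ρ.trace := by
  have h : ∀ p, auxX ρ p p = ∑ i, ρ (i, p.2) (i, p.2) := by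
    intro p
    simp [auxX, Matrix.sum_apply, auxA_apply]
  simp only [Matrix.trace, Matrix.diag, h, Fintype.sum_prod_type]
  rw [Finset.sum_const, Finset.sum_comm]
  simp

lemma aux_psd {d D : ℕ} (ρ : Matrix (Fin d × Fin D) (Fin d × Fin D) ℂ) (hρ : ρ.PosSemidef)
    (s : ℝ) (hs : s * s = 1) : (auxX ρ + (s : ℂ) • ptA ρ).PosSemidef := by
  have hs' : (s : ℂ) * s = 1 := by exact_mod_cast hs
  have key : auxX ρ + (s : ℂ) • ptA ρ = (1 / 2 : ℝ) • ∑ i, ∑ k,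
      (auxA d D i k + (s : ℂ) • auxA d D k i)ᴴ * ρ * (auxA d D i k + (s : ℂ) • auxA d D k i) := by
    have e : ∀ i k, (auxA d D i k + (s : ℂ) • auxA d D k i)ᴴ * ρ *
        (auxA d D i k + (s : ℂ) • auxA d D k i) =
        ((auxA d D i k)ᴴ * ρ * auxA d D i k + (auxA d D k i)ᴴ * ρ * auxA d D k i) +
        (s : ℂ) • ((auxA d D i k)ᴴ * ρ * auxA d D k i + (auxA d D k i)ᴴ * ρ * auxA d D i k) := by
      intro i k
      simp only [Matrix.conjTranspose_add, Matrix.conjTranspose_smul, Matrix.add_mul,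
        Matrix.mul_add, Matrix.smul_mul, Matrix.mul_smul, smul_add, smul_smul, 
        Complex.star_def, Complex.conj_ofReal, hs', one_smul]
      abel
    simp only [e, Finset.sum_add_distrib, ← Finset.smul_sum]
    rw [Finset.sum_comm (f := fun i k => (auxA d D k i)ᴴ * ρ * auxA d D k i),
      Finset.sum_comm (f := fun i k => (auxA d D k i)ᴴ * ρ * auxA d D i k), ← ptA_eq, ← auxX]
    ext p q
    simp
    ring
  rw [key]
  refine Matrix.PosSemidef.smul ?_ (by norm_num)
  exact Matrix.posSemidef_sum _ fun i _ => Matrix.posSemidef_sum _ fun k _ =>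
    hρ.conjTranspose_mul_mul_same _

lemma ptA_trace {d D : ℕ} (ρ : Matrix (Fin d × Fin D) (Fin d × Fin D) ℂ) :
    (ptA ρ).trace = ρ.trace := rfl

/-- dimension bound on the negativity. Any quantum state on
C^d ⊗ C^D with d ≤ D has negativity at most (d - 1)/2. -/
theorem negativity_dimension_bound (d D : ℕ) (hd : 0 < d) (hdD : d ≤ D)
    (ρ : Matrix (Fin d × Fin D) (Fin d × Fin D) ℂ)
    (hρ : ρ.PosSemidef) (htr : Matrix.trace ρ = 1) :
    negEig (ptA ρ) ≤ ((d : ℝ) - 1) / 2 := by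
  have hH : (ptA ρ).IsHermitian := by
    ext p q
    exact hρ.1.apply _ _
  have h := negEig_le_aux (ptA ρ) (auxX ρ) hH
    (by simpa [sub_eq_add_neg] using aux_psd ρ hρ (-1) (by norm_num))
    (by simpa using aux_psd ρ hρ 1 (by norm_num))
  rw [auxX_trace, ptA_trace, htr] at h
  simpa using h
end

section
/- Variational form of the negativity: let ρ be a bipartite quantum state on ι_A × ι_B. Then (a) for all Hermitian matrices σ₊, σ₋ on ι_A × ι_B with ρ = σ₊ − σ₋ and both σ₊^{T_A} and σ₋^{T_A} positive semidefinite, one has Re tr σ₋ ≥ N(ρ); and (b) there exist Hermitian σ₊, σ₋ with ρ = σ₊ − σ₋, σ₊^{T_A} and σ₋^{T_A} positive semidefinite, and Re tr σ₋ = N(ρ). Hence N(ρ) = min { tr σ₋ : ρ = σ₊ − σ₋, σ₊^{T_A} ≥ 0, σ₋^{T_A} ≥ 0 }. -/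
open Matrix
open scoped Kronecker ComplexOrder

theorem negEig_le_aux_s13 {ι : Type*} [Fintype ι] [DecidableEq ι] (M P Q : Matrix ι ι ℂ)
    (hM : M = P - Q) (hP : P.PosSemidef) (hQ : Q.PosSemidef) : negEig M ≤ (Matrix.trace Q).re := by
  have h : M.IsHermitian := by rw [hM]; exact hP.1.sub hQ.1
  have hU : (h.eigenvectorUnitary : Matrix ι ι ℂ) * star (h.eigenvectorUnitary : Matrix ι ι ℂ) = 1 :=
    Unitary.coe_mul_star_self _
  have hU' : star (h.eigenvectorUnitary : Matrix ι ι ℂ) * (h.eigenvectorUnitary : Matrix ι ι ℂ) = 1 :=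
    Unitary.coe_star_mul_self _
  have hs := h.spectral_theorem
  rw [Unitary.conjStarAlgAut_apply] at hs
  unfold negEig
  rw [dif_pos h]
  set U : Matrix ι ι ℂ := (h.eigenvectorUnitary : Matrix ι ι ℂ) with hUdef
  have hD : Uᴴ * P * U - Uᴴ * Q * U = diagonal (RCLike.ofReal ∘ h.eigenvalues) := by
    calc _ = Uᴴ * M * U := by rw [hM]; noncomm_ring
      _ = Uᴴ * (U * diagonal (RCLike.ofReal ∘ h.eigenvalues) * star U) * U := by
          conv_lhs => rw [hs]
      _ = (star U * U) * diagonal (RCLike.ofReal ∘ h.eigenvalues) * (star U * U) := by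
          rw [← star_eq_conjTranspose]; noncomm_ring
      _ = _ := by rw [hU']; simp
  have hP' := hP.conjTranspose_mul_mul_same U
  have hQ' := hQ.conjTranspose_mul_mul_same U
  have htr : trace Q = trace (Uᴴ * Q * U) := by
    rw [trace_mul_comm, ← mul_assoc, ← star_eq_conjTranspose, hU, one_mul]
  rw [htr, trace, Complex.re_sum]
  refine Finset.sum_le_sum fun i _ => ?_
  have h1 := (Complex.le_def.1 (hP'.diag_nonneg (i := i))).1
  have h2 := (Complex.le_def.1 (hQ'.diag_nonneg (i := i))).1
  have h3 := congrArg Complex.re (congrFun (congrFun hD i) i)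
  simp only [Matrix.sub_apply, diagonal_apply_eq, Complex.sub_re, Function.comp, Complex.coe_algebraMap,
    RCLike.ofReal_eq_complex_ofReal, Complex.ofReal_re, Complex.zero_re, diag_apply] at h1 h2 h3 ⊢
  exact max_le h2 (by linarith)

theorem negEig_attained_aux {ι : Type*} [Fintype ι] [DecidableEq ι] (M : Matrix ι ι ℂ)
    (h : M.IsHermitian) : ∃ P Q : Matrix ι ι ℂ, M = P - Q ∧ P.PosSemidef ∧ Q.PosSemidef ∧
      (Matrix.trace Q).re = negEig M := by
  have hU' : star (h.eigenvectorUnitary : Matrix ι ι ℂ) * (h.eigenvectorUnitary : Matrix ι ι ℂ) = 1 :=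
    Unitary.coe_star_mul_self _
  have hs := h.spectral_theorem
  rw [Unitary.conjStarAlgAut_apply] at hs
  unfold negEig
  rw [dif_pos h]
  set U : Matrix ι ι ℂ := (h.eigenvectorUnitary : Matrix ι ι ℂ) with hUdef
  refine ⟨U * diagonal (fun i => ((max 0 (h.eigenvalues i) : ℝ) : ℂ)) * Uᴴ,
    U * diagonal (fun i => ((max 0 (-h.eigenvalues i) : ℝ) : ℂ)) * Uᴴ, ?_, ?_, ?_, ?_⟩
  · rw [← sub_mul, ← mul_sub, diagonal_sub]
    refine hs.trans ?_
    rw [star_eq_conjTranspose]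
    congr 3
    funext i
    simp only [Function.comp, ← Complex.ofReal_sub]
    suffices hx : h.eigenvalues i = max 0 (h.eigenvalues i) - max 0 (-h.eigenvalues i) from
      congrArg Complex.ofReal hx
    rcases le_total 0 (h.eigenvalues i) with h0 | h0
    · rw [max_eq_right h0, max_eq_left (by linarith)]; ring
    · rw [max_eq_left h0, max_eq_right (by linarith)]; ring
  · refine PosSemidef.mul_mul_conjTranspose_same (PosSemidef.diagonal fun i => ?_) U
    exact Complex.zero_le_real.2 (le_max_left _ _)
  · refine PosSemidef.mul_mul_conjTranspose_same (PosSemidef.diagonal fun i => ?_) U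
    exact Complex.zero_le_real.2 (le_max_left _ _)
  · rw [trace_mul_comm, ← mul_assoc, ← star_eq_conjTranspose, hU', one_mul, trace_diagonal,
      Complex.re_sum]
    simp only [Complex.ofReal_re]

theorem ptA_herm_aux {ιA ιB : Type*} {ρ : Matrix (ιA × ιB) (ιA × ιB) ℂ} (h : ρ.IsHermitian) :
    (ptA ρ).IsHermitian := by
  ext p q
  exact h.apply _ _

theorem ptA_trace_aux {ιA ιB : Type*} [Fintype ιA] [Fintype ιB]
    (ρ : Matrix (ιA × ιB) (ιA × ιB) ℂ) : trace (ptA ρ) = trace ρ := rfl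

/-- variational form of the negativity. (a) Every decomposition
ρ = σ₊ - σ₋ with σ₊^{T_A}, σ₋^{T_A} ⪰ 0 satisfies tr σ₋ ≥ N(ρ); (b) some such
decomposition attains tr σ₋ = N(ρ). Hence N(ρ) is the minimum of tr σ₋. -/
theorem negativity_variational_form
    {ιA ιB : Type*} [Fintype ιA] [Fintype ιB] [Nonempty ιA] [Nonempty ιB]
    [DecidableEq ιA] [DecidableEq ιB]
    (ρ : Matrix (ιA × ιB) (ιA × ιB) ℂ) (hρ : ρ.PosSemidef) (htr : Matrix.trace ρ = 1) :
    (∀ σp σm : Matrix (ιA × ιB) (ιA × ιB) ℂ, σp.IsHermitian → σm.IsHermitian →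
      ρ = σp - σm → (ptA σp).PosSemidef → (ptA σm).PosSemidef →
      (Matrix.trace σm).re ≥ negEig (ptA ρ)) ∧
    (∃ σp σm : Matrix (ιA × ιB) (ιA × ιB) ℂ, σp.IsHermitian ∧ σm.IsHermitian ∧
      ρ = σp - σm ∧ (ptA σp).PosSemidef ∧ (ptA σm).PosSemidef ∧
      (Matrix.trace σm).re = negEig (ptA ρ)) := by
  refine ⟨?_, ?_⟩
  · intro σp σm _ _ h hp hm
    rw [← ptA_trace_aux σm]
    exact negEig_le_aux_s13 (ptA ρ) (ptA σp) (ptA σm) (by rw [h]; rfl) hp hm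
  · obtain ⟨P, Q, h, hP, hQ, ht⟩ := negEig_attained_aux (ptA ρ) (ptA_herm_aux hρ.1)
    refine ⟨ptA P, ptA Q, ptA_herm_aux hP.1, ptA_herm_aux hQ.1, ?_, hP, hQ, ht⟩
    exact congrArg ptA h
end

section
/- Positivity of the moment matrix (property (i)): let ρ be a positive semidefinite complex matrix indexed by (ι_A × ι_B) × (ι_A × ι_B), and let A : κ_A → Matrix ι_A ι_A ℂ, B : κ_B → Matrix ι_B ι_B ℂ be finite families of matrices. Then the moment matrix χ[ρ] is positive semidefinite. -/
open Matrix
open scoped Kronecker ComplexOrder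

/-- The moment matrix of ρ with respect to the families A, B:
χ[ρ]((i,j),(k,l)) = tr[ρ · ((A k)ᴴ (A i) ⊗ (B l)ᴴ (B j))]. -/
noncomputable def momentMatrix {ιA ιB κA κB : Type*} [Fintype ιA] [Fintype ιB]
    (ρ : Matrix (ιA × ιB) (ιA × ιB) ℂ)
    (A : κA → Matrix ιA ιA ℂ) (B : κB → Matrix ιB ιB ℂ) :
    Matrix (κA × κB) (κA × κB) ℂ :=
  fun p q => Matrix.trace (ρ * (((A q.1)ᴴ * A p.1) ⊗ₖ ((B q.2)ᴴ * B p.2)))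

/-- property (i): if ρ is positive semidefinite then so is the moment
matrix χ[ρ]. -/
theorem momentMatrix_posSemidef
    {ιA ιB κA κB : Type*} [Fintype ιA] [Fintype ιB] [Fintype κA] [Fintype κB]
    [Nonempty ιA] [Nonempty ιB] [DecidableEq ιA] [DecidableEq ιB]
    (ρ : Matrix (ιA × ιB) (ιA × ιB) ℂ) (hρ : ρ.PosSemidef)
    (A : κA → Matrix ιA ιA ℂ) (B : κB → Matrix ιB ιB ℂ) :
    (momentMatrix ρ A B).PosSemidef := by
  have key : momentMatrix ρ A B = ∑ r : ιA × ιB,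
      (Matrix.of fun (p : κA × κB) s => (A p.1 ⊗ₖ B p.2) r s) * ρ *
        (Matrix.of fun (p : κA × κB) s => (A p.1 ⊗ₖ B p.2) r s)ᴴ := by
    ext p q
    have h : momentMatrix ρ A B p q
        = Matrix.trace ((A p.1 ⊗ₖ B p.2) * ρ * (A q.1 ⊗ₖ B q.2)ᴴ) := by
      unfold momentMatrix
      rw [Matrix.mul_kronecker_mul, ← Matrix.conjTranspose_kronecker, ← Matrix.mul_assoc,
        Matrix.trace_mul_comm, Matrix.mul_assoc]
    rw [h, Matrix.sum_apply]
    rfl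
  rw [key]
  exact Matrix.posSemidef_sum _ fun r _ => hρ.mul_mul_conjTranspose_same _
end

section
/- Partial transposition of the moment matrix (property (ii)): let ρ be a complex matrix indexed by (ι_A × ι_B) × (ι_A × ι_B) whose partial transpose ρ^{T_A} is positive semidefinite, and let A : κ_A → Matrix ι_A ι_A ℂ, B : κ_B → Matrix ι_B ι_B ℂ be finite families of matrices. Then the partial transpose of the moment matrix, defined by χ[ρ]^{T_Ā}((i,j),(k,l)) = χ[ρ]((k,j),(i,l)), is positive semidefinite. -/
open Matrix
open scoped Kronecker ComplexOrder

/-- property (ii): if ρ^{T_A} is positive semidefinite then so is the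
partial transpose χ[ρ]^{T_Ā} of the moment matrix. -/
theorem momentMatrix_partialTranspose_posSemidef
    {ιA ιB κA κB : Type*} [Fintype ιA] [Fintype ιB] [Fintype κA] [Fintype κB]
    [Nonempty ιA] [Nonempty ιB] [DecidableEq ιA] [DecidableEq ιB]
    (ρ : Matrix (ιA × ιB) (ιA × ιB) ℂ) (hρ : (ptA ρ).PosSemidef)
    (A : κA → Matrix ιA ιA ℂ) (B : κB → Matrix ιB ιB ℂ) :
    (ptA (momentMatrix ρ A B)).PosSemidef := by
  have key : ptA (momentMatrix ρ A B) = ∑ z : ιA × ιB,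
      (Matrix.of fun (p : κA × κB) (r : ιA × ιB) => star (A p.1 z.1 r.1) * B p.2 z.2 r.2) * ptA ρ *
      (Matrix.of fun (p : κA × κB) (r : ιA × ιB) => star (A p.1 z.1 r.1) * B p.2 z.2 r.2)ᴴ := by
    ext p q
    let F : ιA → ιB → ιA → ιB → ιA → ιB → ℂ := fun a b c d x y =>
      ρ (a, b) (c, d) * (star (A p.1 x c) * A q.1 x a * (star (B q.2 y d) * B p.2 y b))
    have h1 : ptA (momentMatrix ρ A B) p q =
        ∑ w : ιA × ιB, ∑ v : ιA × ιB, ∑ z : ιA × ιB, F w.1 w.2 v.1 v.2 z.1 z.2 := by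
      simp only [ptA, momentMatrix, Matrix.trace, Matrix.diag, Matrix.mul_apply,
        Matrix.kroneckerMap_apply, Matrix.conjTranspose_apply]
      refine Finset.sum_congr rfl fun w _ => Finset.sum_congr rfl fun v _ => ?_
      rw [Finset.sum_mul_sum, Finset.mul_sum, Fintype.sum_prod_type]
      refine Finset.sum_congr rfl fun x _ => ?_
      rw [Finset.mul_sum]
    rw [h1, Matrix.sum_apply]
    have h2 : ∀ w : ιA × ιB, ∑ v : ιA × ιB, ∑ z : ιA × ιB, F w.1 w.2 v.1 v.2 z.1 z.2
        = ∑ z : ιA × ιB, ∑ v : ιA × ιB, F w.1 w.2 v.1 v.2 z.1 z.2 := fun w => Finset.sum_comm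
    simp only [h2]
    rw [Finset.sum_comm]
    refine Finset.sum_congr rfl fun z _ => ?_
    simp only [Matrix.mul_apply, Finset.sum_mul, Matrix.conjTranspose_apply, Matrix.of_apply,
      Fintype.sum_prod_type]
    refine Finset.sum_congr rfl fun a _ => ?_
    -- left: b c d, right: d c b
    have h3 : ∑ b : ιB, ∑ c : ιA, ∑ d : ιB, F a b c d z.1 z.2
        = ∑ d : ιB, ∑ c : ιA, ∑ b : ιB, F a b c d z.1 z.2 := by
      rw [Finset.sum_comm]
      rw [Finset.sum_comm (s := (Finset.univ : Finset ιB)) (t := (Finset.univ : Finset ιA))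
        (f := fun d c => ∑ b : ιB, F a b c d z.1 z.2)]
      exact Finset.sum_congr rfl fun c _ => Finset.sum_comm
    rw [h3]
    refine Finset.sum_congr rfl fun d _ => Finset.sum_congr rfl fun c _ =>
      Finset.sum_congr rfl fun b _ => ?_
    simp only [F, ptA, star_mul', star_star]
    ring
  rw [key]
  exact Matrix.posSemidef_sum _ fun z _ => hρ.mul_mul_conjTranspose_same _
end
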